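/- arXiv:2004.05330 — 2 statements merged into one kernel-verified Lean document; each statement's English description precedes it below -/
import Mathlib

section
/- There exist at least 3 pairwise inequivalent s-extremal singly even self-dual [76,38,14] codes, each admitting an automorphism of order 19 (a coordinate permutation of order 19 mapping the code onto itself); that is, at least 3 pairwise inequivalent singly even self-dual codes of length 76 with minimum weight 14, shadow minimum weight 14, and an automorphism of order 19. -/
open Finset

/-- Hamming weight of a binary vector. -/
def wt {n : ℕ} (x : Fin n → ZMod 2) : ℕ := hammingNorm x

/-- The dual of a set of binary vectors with respect to the standard inner product. -/
def dualSet {n : ℕ} (C : Set (Fin n → ZMod 2)) : Set (Fin n → ZMod 2) :=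
  {x | ∀ y ∈ C, ∑ i, x i * y i = 0}

/-- A binary linear code is self-dual if it equals its dual code. -/
def IsSelfDual {n : ℕ} (C : Submodule (ZMod 2) (Fin n → ZMod 2)) : Prop :=
  (C : Set (Fin n → ZMod 2)) = dualSet (C : Set (Fin n → ZMod 2))

/-- A self-dual code is singly even if some codeword has weight not divisible by 4. -/
def IsSinglyEvenSelfDual {n : ℕ} (C : Submodule (ZMod 2) (Fin n → ZMod 2)) : Prop :=
  IsSelfDual C ∧ ∃ x ∈ C, ¬ (4 ∣ wt x)

/-- The doubly even subcode `C₀` of `C` (as a set): codewords of weight ≡ 0 (mod 4). -/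
def evenSub {n : ℕ} (C : Submodule (ZMod 2) (Fin n → ZMod 2)) : Set (Fin n → ZMod 2) :=
  {x | x ∈ C ∧ 4 ∣ wt x}

/-- The shadow `S = C₀^⊥ \ C` of a singly even self-dual code. -/
def shadow {n : ℕ} (C : Submodule (ZMod 2) (Fin n → ZMod 2)) : Set (Fin n → ZMod 2) :=
  dualSet (evenSub C) \ (C : Set (Fin n → ZMod 2))

/-- The minimum (nonzero) weight of a set of vectors. -/
noncomputable def minWtSet {n : ℕ} (S : Set (Fin n → ZMod 2)) : ℕ :=
  sInf {w | ∃ x ∈ S, x ≠ 0 ∧ wt x = w}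

/-- The minimum weight of a code. -/
noncomputable def minWt {n : ℕ} (C : Submodule (ZMod 2) (Fin n → ZMod 2)) : ℕ :=
  minWtSet (C : Set (Fin n → ZMod 2))

/-- A singly even self-dual code of length `n` is s-extremal if
`d(S) = n/2 + 4 - 2 d(C)`. -/
def IsSExtremal {n : ℕ} (C : Submodule (ZMod 2) (Fin n → ZMod 2)) : Prop :=
  IsSinglyEvenSelfDual C ∧
    (minWtSet (shadow C) : ℤ) = ((n / 2 : ℕ) : ℤ) + 4 - 2 * (minWt C : ℤ)

/-- Two codes are equivalent if one is obtained from the other by permuting coordinates. -/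
def CodeEquiv {n : ℕ} (C D : Submodule (ZMod 2) (Fin n → ZMod 2)) : Prop :=
  ∃ σ : Equiv.Perm (Fin n),
    Submodule.map (LinearMap.funLeft (ZMod 2) (ZMod 2) σ) C = D

/-- The neighbor `C₀ ∪ (t + C₀)` of `C` obtained from a shadow vector `t`:
the span of the doubly even subcode together with `t`. -/
def neighborCode {n : ℕ} (C : Submodule (ZMod 2) (Fin n → ZMod 2))
    (t : Fin n → ZMod 2) : Submodule (ZMod 2) (Fin n → ZMod 2) :=
  Submodule.span (ZMod 2) (evenSub C ∪ {t})


/-! ### Masks, parities and weights -/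

/-- The binary vector of length 76 with mask `m`. -/
def vec (m : ℕ) : Fin 76 → ZMod 2 := fun i => if m.testBit i then 1 else 0

def bz (b : Bool) : ZMod 2 := if b then 1 else 0

theorem bz_xor (a b : Bool) : bz (a ^^ b) = bz a + bz b := by
  revert a b; decide

theorem bz_and (a b : Bool) : bz (a && b) = bz a * bz b := by
  revert a b; decide

theorem bz_inj {a b : Bool} (h : bz a = bz b) : a = b := by
  revert a b; decide

theorem bz_val (a : Bool) : (bz a).val = a.toNat := by
  revert a; decide

/-- parity of the `n` lowest bits -/
def parS (n x : ℕ) : ZMod 2 := ∑ i ∈ range n, bz (x.testBit i)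

/-- number of ones among the `n` lowest bits -/
def pc (n x : ℕ) : ℕ := ∑ i ∈ range n, (x.testBit i).toNat

theorem testBit_shr (x k i : ℕ) : (x >>> k).testBit i = x.testBit (k + i) := by
  simp

theorem parS_add (a b x : ℕ) : parS (a + b) x = parS a x + parS b (x >>> a) := by
  simp only [parS, sum_range_add, testBit_shr]

theorem pc_add (a b x : ℕ) : pc (a + b) x = pc a x + pc b (x >>> a) := by
  simp only [pc, sum_range_add, testBit_shr]

theorem parS_xor (n x y : ℕ) : parS n (x ^^^ y) = parS n x + parS n y := by
  simp only [parS, ← sum_add_distrib, Nat.testBit_xor, bz_xor]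

theorem parS_fold (a x : ℕ) : parS (a + a) x = parS a (x ^^^ (x >>> a)) := by
  rw [parS_add, parS_xor]

theorem parS_succ (n x : ℕ) : parS (n + 1) x = bz (x.testBit 0) + parS n (x >>> 1) := by
  rw [add_comm n 1, parS_add]; simp [parS]

theorem pc_succ (n x : ℕ) : pc (n + 1) x = (x.testBit 0).toNat + pc n (x >>> 1) := by
  rw [add_comm n 1, pc_add]; simp [pc]

def psh (k x : ℕ) : ℕ := Nat.xor x (Nat.shiftRight x k)

def bt (n c : ℕ) : Bool := Nat.beq (Nat.land (Nat.shiftRight n c) 1) 1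

theorem bt_eq (n c : ℕ) : bt n c = n.testBit c := by
  have h : bt n c = decide ((n >>> c) &&& 1 = 1) := by
    rw [Bool.eq_iff_iff, decide_eq_true_iff]
    exact iff_of_eq Nat.beq_eq
  rw [h, Nat.testBit, Nat.and_comm]
  have := Nat.and_one_is_mod (n >>> c)
  rw [Nat.and_comm] at this
  rw [this]
  rcases Nat.mod_two_eq_zero_or_one (n >>> c) with h | h <;> simp [h]

/-- parity of a number below `2 ^ 128` -/
def par (x : ℕ) : Bool := bt (psh 1 (psh 2 (psh 4 (psh 8 (psh 16 (psh 32 (psh 64 x))))))) 0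

theorem psh_eq (k x : ℕ) : psh k x = x ^^^ (x >>> k) := rfl

theorem par_eq128 (x : ℕ) : bz (par x) = parS 128 x := by
  have f : ∀ a x, parS (a + a) x = parS a (psh a x) := parS_fold
  rw [f 64, f 32, f 16, f 8, f 4, f 2, f 1]
  simp [parS, par, bt_eq]

theorem parS_ge (n k x : ℕ) (h : x < 2 ^ n) : parS (n + k) x = parS n x := by
  rw [parS_add, Nat.shiftRight_eq_div_pow, Nat.div_eq_of_lt h]
  simp [parS, bz]

theorem par_eq (x : ℕ) (h : x < 2 ^ 76) : bz (par x) = parS 76 x := by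
  rw [par_eq128, show 128 = 76 + 52 from rfl, parS_ge _ _ _ h]

def dot (x y : Fin 76 → ZMod 2) : ZMod 2 := ∑ i, x i * y i

theorem vec_apply (m : ℕ) (i : Fin 76) : vec m i = bz (m.testBit i) := rfl

theorem dot_vec (a b : ℕ) : dot (vec a) (vec b) = parS 76 (a &&& b) := by
  simp only [dot, parS, vec_apply, Nat.testBit_and, bz_and]
  exact Fin.sum_univ_eq_sum_range (fun i => bz (a.testBit i) * bz (b.testBit i)) 76

theorem dot_vec_par (a b : ℕ) (h : a < 2 ^ 76) :
    dot (vec a) (vec b) = bz (par (Nat.land a b)) := by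
  rw [dot_vec, par_eq]; rfl
  exact lt_of_le_of_lt Nat.and_le_left h

theorem wt_eq_sum (x : Fin 76 → ZMod 2) : wt x = ∑ i, (x i).val := by
  have : ∀ a : ZMod 2, a.val = if a ≠ 0 then 1 else 0 := by decide
  simp only [this, wt, hammingNorm, Finset.card_filter]

theorem wt_vec (m : ℕ) : wt (vec m) = pc 76 m := by
  rw [wt_eq_sum, pc]
  simp only [vec_apply, bz_val]
  exact Fin.sum_univ_eq_sum_range (fun i => (m.testBit i).toNat) 76

theorem vec_surj (x : Fin 76 → ZMod 2) : ∃ m < 2 ^ 76, vec m = x := by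
  refine ⟨Nat.ofBits (fun i => decide (x i = 1)), Nat.ofBits_lt_two_pow _, ?_⟩
  funext i
  have : ∀ a : ZMod 2, bz (decide (a = 1)) = a := by decide
  rw [vec_apply, Nat.testBit_ofBits_lt _ _ i.2]
  exact this _

theorem vec_inj {a b : ℕ} (ha : a < 2 ^ 76) (hb : b < 2 ^ 76) (h : vec a = vec b) : a = b := by
  apply Nat.eq_of_testBit_eq
  intro i
  by_cases hi : i < 76
  · exact bz_inj (congrFun h ⟨i, hi⟩)
  · have := Nat.pow_le_pow_right (n := 2) (by norm_num) (not_lt.mp hi)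
    rw [Nat.testBit_lt_two_pow (by omega), Nat.testBit_lt_two_pow (by omega)]

theorem vec_xor (a b : ℕ) : vec (a ^^^ b) = vec a + vec b := by
  funext i; simp [vec_apply, bz_xor]

theorem vec_zero : vec 0 = 0 := by
  funext i; simp [vec_apply, bz]

theorem dot_comm (x y : Fin 76 → ZMod 2) : dot x y = dot y x := by
  simp only [dot, mul_comm]

theorem dot_add (x y z : Fin 76 → ZMod 2) : dot x (y + z) = dot x y + dot x z := by
  simp only [dot, Pi.add_apply, mul_add, sum_add_distrib]

theorem dot_smul (x y : Fin 76 → ZMod 2) (c : ZMod 2) : dot x (c • y) = c * dot x y := by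
  simp only [dot, Pi.smul_apply, smul_eq_mul, mul_sum, mul_left_comm]

theorem dot_zero (x : Fin 76 → ZMod 2) : dot x 0 = 0 := by simp [dot]

theorem wt_add (x y : Fin 76 → ZMod 2) (h : dot x y = 0) :
    ∃ k, wt (x + y) + 4 * k = wt x + wt y := by
  have h1 : wt (x + y) + 2 * ∑ i, (x i * y i).val = wt x + wt y := by
    have : ∀ a b : ZMod 2, (a + b).val + 2 * (a * b).val = a.val + b.val := by decide
    simp only [wt_eq_sum, mul_sum, ← sum_add_distrib, Pi.add_apply, this]
  have h2 : ((∑ i, (x i * y i).val : ℕ) : ZMod 2) = 0 := by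
    rw [← h, dot]; push_cast; simp
  rw [ZMod.natCast_eq_zero_iff] at h2
  obtain ⟨k, hk⟩ := h2
  exact ⟨k, by omega⟩

/-! ### Codes given by 38 parity checks -/

/-- The code with parity checks the masks in `H`. -/
def code (H : List ℕ) : Submodule (ZMod 2) (Fin 76 → ZMod 2) where
  carrier := {x | ∀ h ∈ H, dot (vec h) x = 0}
  add_mem' := by
    intro a b ha hb h hh
    rw [dot_add, ha h hh, hb h hh, add_zero]
  zero_mem' := fun h _ => dot_zero _
  smul_mem' := by
    intro c x hx h hh
    rw [dot_smul, hx h hh, mul_zero]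

theorem mem_code {H : List ℕ} {x : Fin 76 → ZMod 2} :
    x ∈ code H ↔ ∀ h ∈ H, dot (vec h) x = 0 := Iff.rfl

def orthL (A B : List ℕ) : Bool := A.all fun a => B.all fun b => !(par (Nat.land a b))

def ltL (A : List ℕ) : Bool := A.all fun a => Nat.blt a 75557863725914323419136

def biorth (H G : List ℕ) : Bool :=
  (List.range 38).all fun i => (List.range 38).all fun j =>
    !(Bool.xor (par (Nat.land (H.getD i 0) (G.getD j 0))) (Nat.beq i j))

theorem ltL_spec {A : List ℕ} (h : ltL A = true) : ∀ a ∈ A, a < 2 ^ 76 := by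
  intro a ha
  have := List.all_eq_true.mp h a ha
  exact Nat.le_of_ble_eq_true this

theorem orthL_spec {A B : List ℕ} (hA : ltL A = true) (h : orthL A B = true) :
    ∀ a ∈ A, ∀ b ∈ B, dot (vec a) (vec b) = 0 := by
  intro a ha b hb
  have := List.all_eq_true.mp (List.all_eq_true.mp h a ha) b hb
  rw [dot_vec_par a b (ltL_spec hA a ha)]
  rw [Bool.not_eq_true'] at this
  rw [this]; rfl

/-- all the checks on a system of parity checks for a self-dual code -/
structure Good (H G : List ℕ) : Prop where
  len : H.length = 38
  lt : ltL H = true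
  orth : orthL H H = true
  bio : biorth H G = true

section

variable {H G : List ℕ}

theorem getD_mem (hg : Good H G) (i : Fin 38) : H.getD i 0 ∈ H := by
  have hi : (i : ℕ) < H.length := by rw [hg.len]; exact i.2
  rw [List.getD_eq_getElem _ _ hi]
  exact List.getElem_mem _

theorem bio_spec (hg : Good H G) (i j : Fin 38) :
    dot (vec (H.getD i 0)) (vec (G.getD j 0)) = if i = j then 1 else 0 := by
  have := List.all_eq_true.mp (List.all_eq_true.mp hg.bio i (List.mem_range.mpr i.2)) j
    (List.mem_range.mpr j.2)
  rw [dot_vec_par _ _ (ltL_spec hg.lt _ (getD_mem hg i))]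
  generalize par (Nat.land (H.getD i 0) (G.getD j 0)) = p at *
  by_cases h : i = j
  · subst h
    rw [Nat.beq_refl] at this
    cases p <;> simp_all [bz]
  · have h' : Nat.beq i j = false := by
      rw [Bool.eq_false_iff]; intro hh
      exact h (Fin.ext (Nat.eq_of_beq_eq_true hh))
    rw [h'] at this
    cases p <;> simp_all [bz]

def synd (H : List ℕ) : (Fin 76 → ZMod 2) →ₗ[ZMod 2] (Fin 38 → ZMod 2) where
  toFun x i := dot (vec (H.getD i 0)) x
  map_add' x y := by funext i; exact dot_add _ _ _
  map_smul' c x := by funext i; exact dot_smul _ _ _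

theorem code_eq_ker (hg : Good H G) : code H = LinearMap.ker (synd H) := by
  ext x
  rw [mem_code, LinearMap.mem_ker]
  constructor
  · intro h
    funext i
    exact h _ (getD_mem hg i)
  · intro h a ha
    obtain ⟨n, hn, rfl⟩ := List.getElem_of_mem ha
    have := congrFun h ⟨n, hg.len ▸ hn⟩
    simp only [synd, LinearMap.coe_mk, AddHom.coe_mk, List.getD_eq_getElem _ _ hn] at this
    exact this

theorem finrank_code (hg : Good H G) : Module.finrank (ZMod 2) (code H) = 38 := by
  have hs : LinearMap.range (synd H) = ⊤ := by
    rw [eq_top_iff]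
    intro y _
    refine ⟨∑ j : Fin 38, y j • vec (G.getD j 0), ?_⟩
    rw [map_sum]
    funext i
    rw [Finset.sum_apply]
    simp only [map_smul, Pi.smul_apply, smul_eq_mul]
    have : ∀ j : Fin 38, synd H (vec (G.getD j 0)) i = if i = j then 1 else 0 := fun j =>
      bio_spec hg i j
    simp only [this]
    simp
  have h := LinearMap.finrank_range_add_finrank_ker (synd H)
  rw [hs, finrank_top, Module.finrank_fintype_fun_eq_card, Module.finrank_fintype_fun_eq_card,
    Fintype.card_fin, Fintype.card_fin] at h
  rw [code_eq_ker hg]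
  omega

theorem dot_sum_smul (x : Fin 76 → ZMod 2) (c : Fin 38 → ZMod 2) (f : Fin 38 → Fin 76 → ZMod 2) :
    dot x (∑ i, c i • f i) = ∑ i, c i * dot x (f i) := by
  simp only [dot, Finset.sum_apply, Pi.smul_apply, smul_eq_mul, mul_sum]
  rw [sum_comm]
  simp only [mul_left_comm]

theorem code_eq_span (hg : Good H G) :
    code H = Submodule.span (ZMod 2) (Set.range fun i : Fin 38 => vec (H.getD i 0)) := by
  symm
  apply Submodule.eq_of_le_of_finrank_eq
  · rw [Submodule.span_le]
    rintro _ ⟨i, rfl⟩ h hh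
    exact orthL_spec hg.lt hg.orth _ hh _ (getD_mem hg i)
  · rw [finrank_code hg, finrank_span_eq_card, Fintype.card_fin]
    rw [Fintype.linearIndependent_iff]
    intro c hc j
    have h := congrArg (dot (vec (G.getD j 0))) hc
    rw [dot_sum_smul, dot_zero] at h
    simp only [dot_comm (vec (G.getD j 0)), bio_spec hg] at h
    simpa using h

theorem code_induction (hg : Good H G) {P : (Fin 76 → ZMod 2) → Prop}
    (hP : ∀ h ∈ H, P (vec h)) (h0 : P 0)
    (ha : ∀ x y, x ∈ code H → y ∈ code H → P x → P y → P (x + y)) :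
    ∀ x ∈ code H, P x := by
  intro x hx
  rw [code_eq_span hg] at hx
  induction hx using Submodule.span_induction with
  | mem x h => obtain ⟨i, rfl⟩ := h; exact hP _ (getD_mem hg i)
  | zero => exact h0
  | add x y hx hy ihx ihy =>
    rw [← code_eq_span hg] at hx hy
    exact ha x y hx hy ihx ihy
  | smul c x hx ih =>
    have : ∀ c : ZMod 2, c = 0 ∨ c = 1 := by decide
    rcases this c with rfl | rfl
    · rwa [zero_smul]
    · rwa [one_smul]

theorem code_orth (hg : Good H G) {x y : Fin 76 → ZMod 2} (hx : x ∈ code H) (hy : y ∈ code H) :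
    dot x y = 0 := by
  refine code_induction hg (P := fun y => dot x y = 0) ?_ (dot_zero x) ?_ y hy
  · intro h hh; rw [dot_comm]; exact hx h hh
  · intro a b _ _ ha hb
    show dot x (a + b) = 0
    rw [dot_add, ha, hb, add_zero]

theorem mem_code_self (hg : Good H G) : ∀ h ∈ H, vec h ∈ code H := by
  intro a ha h hh
  exact orthL_spec hg.lt hg.orth _ hh _ ha

theorem code_selfDual (hg : Good H G) : IsSelfDual (code H) := by
  apply Set.Subset.antisymm
  · intro x hx y hy
    exact code_orth hg hx hy
  · intro x hx h hh
    rw [dot_comm]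
    exact hx _ (mem_code_self hg h hh)

/-- weights and a functional that agrees with half the weight -/
theorem evenSub_orth (hg : Good H G) (t : Fin 76 → ZMod 2)
    (ht : ∀ h ∈ H, 4 ∣ wt (vec h) + 2 * (dot t (vec h)).val) :
    t ∈ dualSet (evenSub (code H)) := by
  have key : ∀ y ∈ code H, 4 ∣ wt y + 2 * (dot t y).val := by
    refine code_induction hg ht ?_ ?_
    · rw [dot_zero]; simp [wt]
    · intro x y hx hy h1 h2
      obtain ⟨k, hk⟩ := wt_add x y (code_orth hg hx hy)
      rw [dot_add]
      have : ∀ a b : ZMod 2, ∃ r, (a + b).val + 2 * r = a.val + b.val := fun a b =>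
        ⟨(a * b).val, by revert a b; decide⟩
      obtain ⟨r, hr⟩ := this (dot t x) (dot t y)
      omega
  intro y hy
  have h1 := key y hy.1
  have h2 : 4 ∣ wt y := hy.2
  have h3 : ∀ a : ZMod 2, a.val = 0 ∨ a.val = 1 := by decide
  rcases h3 (dot t y) with h | h
  · exact (ZMod.val_eq_zero _).mp h
  · omega

theorem code_sub_dual (hg : Good H G) {x : Fin 76 → ZMod 2} (hx : x ∈ code H) :
    x ∈ dualSet (evenSub (code H)) := fun _ hy => code_orth hg hx hy.1

end

/-! ### The rotation -/

def rotN (m : ℕ) : ℕ :=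
  Nat.lor (Nat.land (Nat.shiftRight m 1) 37778859805225684566015)
    (Nat.shiftLeft (Nat.land m 144115462954287105) 18)

/-- The permutation of order 19, rotating each of the four blocks of length 19. -/
def sig : Equiv.Perm (Fin 76) where
  toFun i := ⟨if i.1 % 19 = 18 then i.1 - 18 else i.1 + 1, by have := i.2; split <;> omega⟩
  invFun i := ⟨if i.1 % 19 = 0 then i.1 + 18 else i.1 - 1, by have := i.2; split <;> omega⟩
  left_inv i := by
    apply Fin.ext; have := i.2; dsimp only; split <;> split <;> omega
  right_inv i := by
    apply Fin.ext; have := i.2; dsimp only; split <;> split <;> omega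

theorem sig_val (i : Fin 76) :
    (sig i).val = if i.1 % 19 = 18 then i.1 - 18 else i.1 + 1 := rfl

theorem sig_pow : sig ^ 19 = 1 := by
  ext i; revert i; decide +kernel

theorem sig_order : orderOf sig = 19 := by
  have : Fact (Nat.Prime 19) := ⟨by norm_num⟩
  apply orderOf_eq_prime sig_pow
  intro h
  have := congrArg Fin.val (Equiv.congr_fun h 0)
  revert this; decide

theorem vec_rotN (m : ℕ) : vec (rotN m) = vec m ∘ sig := by
  funext i
  rw [Function.comp, vec_apply, vec_apply, sig_val]
  congr 1
  have e : rotN m = ((m >>> 1) &&& 37778859805225684566015) ||| ((m &&& 144115462954287105) <<< 18) := rfl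
  rw [e]
  simp only [Nat.testBit_or, Nat.testBit_and, Nat.testBit_shiftLeft, testBit_shr]
  have h1 : ∀ i : Fin 76, Nat.testBit 37778859805225684566015 i = decide (i.1 % 19 ≠ 18) := by
    decide +kernel
  have h2 : ∀ i : Fin 76, (decide (18 ≤ i.1) && Nat.testBit 144115462954287105 (i - 18))
      = decide (i.1 % 19 = 18) := by
    decide +kernel
  have h2' := h2 i
  rw [h1 i]
  by_cases h : i.1 % 19 = 18
  · simp only [h, decide_true, Bool.and_eq_true, decide_eq_true_eq] at h2'
    have h3 : i.1 ≥ 18 := h2'.1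
    simp [h, h2'.2, h3]
  · have h4 : (decide (i.1 ≥ 18) && (m.testBit (i.1 - 18) && Nat.testBit 144115462954287105 (i.1 - 18))) = false := by
      rw [Bool.and_left_comm]
      rw [show (decide (i.1 ≥ 18) && Nat.testBit 144115462954287105 (i.1 - 18)) = decide (i.1 % 19 = 18) from h2 i]
      simp [h]
    rw [h4]
    simp [h, add_comm]

theorem vec_rotN_iter (m k : ℕ) : vec (rotN^[k] m) = vec m ∘ (sig ^ k : Equiv.Perm (Fin 76)) := by
  induction k generalizing m with
  | zero => simp
  | succ k ih =>
    rw [Function.iterate_succ_apply, ih, vec_rotN, pow_succ']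
    rfl

theorem rotN_lt (m : ℕ) : rotN m < 2 ^ 76 := by
  have e : rotN m = ((m >>> 1) &&& 37778859805225684566015) ||| ((m &&& 144115462954287105) <<< 18) := rfl
  rw [e]
  apply Nat.or_lt_two_pow
  · exact lt_of_le_of_lt Nat.and_le_right (by norm_num)
  · rw [Nat.shiftLeft_eq]
    have : m &&& 144115462954287105 ≤ 144115462954287105 := Nat.and_le_right
    omega

theorem wt_comp (x : Fin 76 → ZMod 2) (τ : Equiv.Perm (Fin 76)) : wt (x ∘ τ) = wt x := by
  rw [wt_eq_sum, wt_eq_sum]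
  exact Equiv.sum_comp τ (fun i => (x i).val)

theorem dot_comp (x y : Fin 76 → ZMod 2) (τ : Equiv.Perm (Fin 76)) :
    dot (x ∘ τ) (y ∘ τ) = dot x y :=
  Equiv.sum_comp τ (fun i => x i * y i)

/-- invariance of a code under a permutation of the coordinates -/
def PInv (C : Submodule (ZMod 2) (Fin 76 → ZMod 2)) (τ : Equiv.Perm (Fin 76)) : Prop :=
  Submodule.map (LinearMap.funLeft (ZMod 2) (ZMod 2) τ) C = C

theorem mem_map_iff (C D : Submodule (ZMod 2) (Fin 76 → ZMod 2)) (τ : Equiv.Perm (Fin 76))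
    (h : Submodule.map (LinearMap.funLeft (ZMod 2) (ZMod 2) τ) C = D) (x : Fin 76 → ZMod 2) :
    x ∘ τ ∈ D ↔ x ∈ C := by
  constructor
  · intro hx
    rw [← h] at hx
    obtain ⟨y, hy, hyx⟩ := hx
    have : y = x := by
      funext i
      have := congrFun hyx (τ.symm i)
      simpa [LinearMap.funLeft] using this
    rwa [← this]
  · intro hx
    rw [← h]
    exact ⟨x, hx, rfl⟩

theorem PInv.pow {C : Submodule (ZMod 2) (Fin 76 → ZMod 2)} {τ : Equiv.Perm (Fin 76)}
    (h : PInv C τ) (k : ℕ) : PInv C (τ ^ k) := by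
  have key : ∀ x : Fin 76 → ZMod 2, x ∘ (τ ^ k : Equiv.Perm (Fin 76)) ∈ C ↔ x ∈ C := by
    intro x
    induction k generalizing x with
    | zero => rfl
    | succ k ih =>
      rw [pow_succ', Equiv.Perm.coe_mul, ← Function.comp_assoc, ih]
      exact mem_map_iff C C τ h x
  ext x
  constructor
  · rintro ⟨y, hy, rfl⟩
    exact (key y).mpr hy
  · intro hx
    refine ⟨x ∘ ((τ ^ k).symm), ?_, ?_⟩
    · apply (key _).mp
      convert hx using 1
      funext i; simp
    · funext i; simp [LinearMap.funLeft]

theorem dual_comp {C : Submodule (ZMod 2) (Fin 76 → ZMod 2)} {τ : Equiv.Perm (Fin 76)}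
    (h : PInv C τ) {x : Fin 76 → ZMod 2} (hx : x ∈ dualSet (evenSub C)) :
    x ∘ τ ∈ dualSet (evenSub C) := by
  intro y hy
  have e : y = (y ∘ τ.symm) ∘ τ := by funext i; simp
  rw [e] at hy ⊢
  rw [← hx (y ∘ τ.symm) ⟨(mem_map_iff C C τ h _).mp hy.1, by rw [← wt_comp _ τ]; exact hy.2⟩]
  exact dot_comp _ _ τ

theorem code_inv {H G : List ℕ} (hg : Good H G) (hr : orthL H (H.map rotN) = true) :
    PInv (code H) sig := by
  apply Submodule.eq_of_le_of_finrank_eq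
  · rintro _ ⟨x, hx, rfl⟩
    show x ∘ sig ∈ code H
    refine code_induction hg (P := fun x => x ∘ sig ∈ code H) ?_ ?_ ?_ x hx
    · intro a ha h hh
      rw [← vec_rotN]
      exact orthL_spec hg.lt hr h hh _ (List.mem_map_of_mem ha)
    · exact (code H).zero_mem
    · intro x y _ _ hx hy
      exact (code H).add_mem hx hy
  · exact LinearEquiv.finrank_map_eq (LinearEquiv.funCongrLeft (ZMod 2) (ZMod 2) sig) (code H)

/-! ### Bit-sliced enumeration -/

/-- binary search trees -/
inductive BT
  | lf
  | nd (l : BT) (v : ℕ) (r : BT)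

noncomputable def memT (t : BT) (x : ℕ) : Bool :=
  BT.rec (motive := fun _ => Bool) false
    (fun _ v _ ihl ihr => cond (Nat.beq x v) true (cond (Nat.ble x v) ihl ihr)) t

def BT.toList : BT → List ℕ
  | .lf => []
  | .nd l v r => l.toList ++ v :: r.toList

theorem memT_spec (t : BT) (x : ℕ) (h : memT t x = true) : x ∈ t.toList := by
  induction t with
  | lf => exact absurd h Bool.false_ne_true
  | nd l v r ihl ihr =>
    have h' : cond (Nat.beq x v) true (cond (Nat.ble x v) (memT l x) (memT r x)) = true := h
    rw [BT.toList, List.mem_append, List.mem_cons]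
    cases h1 : Nat.beq x v
    · rw [h1] at h'
      cases h2 : Nat.ble x v <;> rw [h2] at h'
      · exact Or.inr (Or.inr (ihr h'))
      · exact Or.inl (ihl h')
    · exact Or.inr (Or.inl (Nat.eq_of_beq_eq_true h1))

/-- evaluate the argument before continuing -/
noncomputable def frc {α : Type} (n : ℕ) (k : ℕ → α) : α :=
  Nat.rec (motive := fun _ => α) (k 0) (fun m _ => k (Nat.succ m)) n

theorem frc_eq {α : Type} (n : ℕ) (k : ℕ → α) : frc n k = k n := by
  cases n <;> rfl

/-- bit-sliced four-bit counters with an overflow flag -/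
noncomputable def cntK {α : Type} (k : ℕ → ℕ → ℕ → ℕ → ℕ → α) (l : List ℕ) :
    ℕ → ℕ → ℕ → ℕ → ℕ → α :=
  List.rec (motive := fun _ => ℕ → ℕ → ℕ → ℕ → ℕ → α) k
    (fun x _ ih s d c b a =>
      ih (Nat.lor s (Nat.land d (Nat.land c (Nat.land b (Nat.land a x)))))
        (Nat.xor d (Nat.land c (Nat.land b (Nat.land a x))))
        (Nat.xor c (Nat.land b (Nat.land a x)))
        (Nat.xor b (Nat.land a x)) (Nat.xor a x)) l

noncomputable def flipL (ons : ℕ) (Q : List ℕ) : ℕ → List ℕ :=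
  List.rec (motive := fun _ => ℕ → List ℕ) (fun _ => [])
    (fun q _ ih F => cond (bt F 0) (Nat.xor q ons) q :: ih (Nat.shiftRight F 1)) Q

noncomputable def xorSel (cols : List ℕ) : ℕ → ℕ :=
  List.rec (motive := fun _ => ℕ → ℕ) (fun _ => 0)
    (fun q _ ih F => cond (bt F 0) (Nat.xor q (ih (Nat.shiftRight F 1)))
      (ih (Nat.shiftRight F 1))) cols

noncomputable def wordAt (c : ℕ) (cols : List ℕ) : ℕ :=
  List.rec (motive := fun _ => ℕ) 0
    (fun q _ ih => Nat.add (Nat.land (Nat.shiftRight q c) 1) (Nat.mul 2 ih)) cols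

noncomputable def ext (P : ℕ → Bool) (d : ℕ) : ℕ → ℕ → Bool :=
  Nat.rec (motive := fun _ => ℕ → ℕ → Bool) (fun m off => cond (Nat.beq m 0) true (P off))
    (fun d ih m off => frc m (fun m => cond (Nat.beq m 0) true
      (cond (ih (Nat.mod m (Nat.pow 2 (Nat.pow 2 d))) off)
        (ih (Nat.shiftRight m (Nat.pow 2 d)) (Nat.add off (Nat.pow 2 d))) false))) d

noncomputable def allL {α : Type} (P : α → Bool) (l : List α) : Bool :=
  List.rec (motive := fun _ => Bool) true (fun x _ ih => cond (P x) ih false) l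

theorem allL_spec {α : Type} (P : α → Bool) (l : List α) (h : allL P l = true) :
    ∀ x ∈ l, P x = true := by
  induction l with
  | nil => simp
  | cons a l ih =>
    have h' : cond (P a) (allL P l) false = true := h
    cases h1 : P a <;> rw [h1] at h'
    · exact absurd h' Bool.false_ne_true
    · intro x hx
      rcases List.mem_cons.mp hx with rfl | hx
      · exact h1
      · exact ih h' x hx

noncomputable def canonA (n : ℕ) : ℕ → ℕ → ℕ :=
  Nat.rec (motive := fun _ => ℕ → ℕ → ℕ) (fun _ best => best)
    (fun _ ih m best => cond (Nat.ble best (rotN m)) (ih (rotN m) best) (ih (rotN m) (rotN m))) n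

theorem canonA_spec (n m best : ℕ) :
    canonA n m best = best ∨ ∃ i, canonA n m best = rotN^[i] m := by
  induction n generalizing m best with
  | zero => exact Or.inl rfl
  | succ n ih =>
    have h : canonA (n + 1) m best = cond (Nat.ble best (rotN m)) (canonA n (rotN m) best)
      (canonA n (rotN m) (rotN m)) := rfl
    rw [h]
    cases Nat.ble best (rotN m)
    · rcases ih (rotN m) (rotN m) with h | ⟨i, h⟩
      · exact Or.inr ⟨1, h⟩
      · exact Or.inr ⟨i + 1, h⟩
    · rcases ih (rotN m) best with h | ⟨i, h⟩
      · exact Or.inl h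
      · exact Or.inr ⟨i + 1, h⟩

theorem wordAt_nil (c : ℕ) : wordAt c [] = 0 := rfl

theorem land_one (x : ℕ) : Nat.land x 1 = (x.testBit 0).toNat := by
  have : Nat.land x 1 = x % 2 := Nat.and_one_is_mod x
  rw [this]; simp only [Nat.testBit_zero]
  rcases Nat.mod_two_eq_zero_or_one x with h | h <;> simp [h]

theorem wordAt_cons (c q : ℕ) (l : List ℕ) :
    wordAt c (q :: l) = (q.testBit c).toNat + 2 * wordAt c l := by
  have h : wordAt c (q :: l) = Nat.land (q >>> c) 1 + 2 * wordAt c l := rfl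
  rw [h, land_one, testBit_shr]; rfl

theorem tb0 (b : Bool) (n : ℕ) : (b.toNat + 2 * n).testBit 0 = b := by
  rw [Nat.testBit_zero]; cases b <;> simp <;> omega

theorem sh1 (b : Bool) (n : ℕ) : (b.toNat + 2 * n) >>> 1 = n := by
  rw [Nat.shiftRight_eq_div_pow]; cases b <;> simp <;> omega

theorem decomp (n : ℕ) : n = (n.testBit 0).toNat + 2 * (n >>> 1) := by
  rw [Nat.testBit_zero, Nat.shiftRight_eq_div_pow]
  rcases Nat.mod_two_eq_zero_or_one n with h | h <;> simp [h] <;> omega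

theorem xorSel_nil (F : ℕ) : xorSel [] F = 0 := rfl

theorem xorSel_cons_tb (q : ℕ) (l : List ℕ) (F c : ℕ) :
    (xorSel (q :: l) F).testBit c = ((F.testBit 0 && q.testBit c) ^^ (xorSel l (F >>> 1)).testBit c) := by
  have h : xorSel (q :: l) F = cond (bt F 0) (q ^^^ (xorSel l (F >>> 1))) (xorSel l (F >>> 1)) := rfl
  rw [h, bt_eq]
  cases F.testBit 0 <;> simp

theorem transpose (V cols : List ℕ) (h : V.length = cols.length) (j c : ℕ) :
    (xorSel V (wordAt j cols)).testBit c = (xorSel cols (wordAt c V)).testBit j := by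
  induction V generalizing cols with
  | nil =>
    cases cols with
    | nil => simp [xorSel_nil]
    | cons => simp at h
  | cons q V ih =>
    cases cols with
    | nil => simp at h
    | cons p cols =>
      rw [xorSel_cons_tb, xorSel_cons_tb, wordAt_cons, wordAt_cons, tb0, tb0, sh1, sh1,
        ih cols (by simpa using h), Bool.and_comm]

theorem wordAt_lt (c : ℕ) (l : List ℕ) : wordAt c l < 2 ^ l.length := by
  induction l with
  | nil => simp [wordAt_nil]
  | cons q l ih =>
    rw [wordAt_cons, List.length_cons, pow_succ]
    have := Bool.toNat_le (q.testBit c)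
    omega

/-- parity form of the selection -/
theorem xorSel_par (cols : List ℕ) (m j : ℕ) :
    bz ((xorSel cols m).testBit j) = parS cols.length (wordAt j cols &&& m) := by
  induction cols generalizing m with
  | nil => simp [xorSel_nil, parS, bz]
  | cons q l ih =>
    rw [xorSel_cons_tb, bz_xor, ih, List.length_cons, parS_succ, Nat.testBit_and,
      Nat.shiftRight_and_distrib, wordAt_cons, tb0, sh1, Bool.and_comm]

theorem xorSel_append (a b : List ℕ) (m : ℕ) :
    xorSel (a ++ b) m = xorSel a m ^^^ xorSel b (m >>> a.length) := by
  induction a generalizing m with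
  | nil => simp [xorSel_nil]
  | cons q l ih =>
    apply Nat.eq_of_testBit_eq
    intro i
    rw [List.cons_append, xorSel_cons_tb, ih, Nat.testBit_xor, Nat.testBit_xor, xorSel_cons_tb,
      List.length_cons, ← Nat.shiftRight_add, add_comm l.length 1, Bool.xor_assoc]

theorem xorSel_mod (a : List ℕ) (m n : ℕ) (h : a.length ≤ n) :
    xorSel a (m % 2 ^ n) = xorSel a m := by
  induction a generalizing m n with
  | nil => rfl
  | cons q l ih =>
    cases n with
    | zero => simp at h
    | succ n =>
      apply Nat.eq_of_testBit_eq
      intro i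
      have h2 : (m % 2 ^ (n + 1)) >>> 1 = (m >>> 1) % 2 ^ n := by
        apply Nat.eq_of_testBit_eq; intro i
        simp only [testBit_shr, Nat.testBit_mod_two_pow]
        congr 1; simp; omega
      rw [xorSel_cons_tb, xorSel_cons_tb, h2, ih _ _ (by simpa using h), Nat.testBit_mod_two_pow]
      simp

/-- the unit columns -/
theorem xorSel_unit (n s m : ℕ) :
    xorSel ((List.range' s n).map (fun i => Nat.pow 2 i)) m = (m % 2 ^ n) <<< s := by
  induction n generalizing s m with
  | zero => simp [xorSel_nil, Nat.mod_one]
  | succ n ih =>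
    apply Nat.eq_of_testBit_eq
    intro i
    rw [List.range'_succ, List.map_cons, xorSel_cons_tb, ih]
    have e : Nat.pow 2 s = 2 ^ s := rfl
    rw [e]
    simp only [Nat.testBit_shiftLeft, Nat.testBit_mod_two_pow, Nat.testBit_two_pow, testBit_shr]
    rcases lt_trichotomy i s with h | h | h
    · have h1 : ¬ s ≤ i := by omega
      have h2 : ¬ s + 1 ≤ i := by omega
      have h3 : s ≠ i := by omega
      simp [h1, h2, h3]
    · subst h; simp
    · have h1 : s ≤ i := by omega
      have h2 : s + 1 ≤ i := by omega
      have h3 : s ≠ i := by omega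
      have h4 : 1 + (i - (s + 1)) = i - s := by omega
      have h5 : (i - (s + 1) < n) ↔ (i - s < n + 1) := by omega
      simp [h1, h2, h3, h4, h5]

/-! Flipping columns. -/

theorem flip_length (ons : ℕ) (Q : List ℕ) (F : ℕ) : (flipL ons Q F).length = Q.length := by
  induction Q generalizing F with
  | nil => rfl
  | cons q l ih =>
    have h : flipL ons (q :: l) F = cond (bt F 0) (q ^^^ ons) q :: flipL ons l (F >>> 1) := rfl
    rw [h, List.length_cons, ih, List.length_cons]

theorem wordAt_flip (ons c : ℕ) (hc : ons.testBit c = true) (Q : List ℕ) (F : ℕ) :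
    wordAt c (flipL ons Q F) = wordAt c Q ^^^ (F % 2 ^ Q.length) := by
  induction Q generalizing F with
  | nil => simp [flipL, wordAt_nil, Nat.mod_one]
  | cons q l ih =>
    have h : flipL ons (q :: l) F = cond (bt F 0) (q ^^^ ons) q :: flipL ons l (F >>> 1) := rfl
    rw [h, wordAt_cons, ih, bt_eq, wordAt_cons]
    have h1 : (cond (F.testBit 0) (q ^^^ ons) q).testBit c = (q.testBit c ^^ F.testBit 0) := by
      cases F.testBit 0 <;> simp [hc]
    rw [h1]
    apply Nat.eq_of_testBit_eq
    intro i
    cases i with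
    | zero =>
      rw [tb0, Nat.testBit_xor, tb0, Nat.testBit_mod_two_pow]
      simp
    | succ i =>
      have e : ∀ (b : Bool) (n : ℕ), (b.toNat + 2 * n).testBit (i + 1) = n.testBit i := by
        intro b n
        rw [Nat.testBit_add_one]
        congr 1
        cases b <;> simp <;> omega
      rw [e, Nat.testBit_xor, Nat.testBit_xor, e, Nat.testBit_mod_two_pow, Nat.testBit_mod_two_pow,
        testBit_shr, List.length_cons, add_comm 1 i]
      simp

/-! Counters. -/

def CInv (p n s d c b a : ℕ) : Prop :=
  n ≤ 15 → s.testBit p = false ∧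
    n = 8 * (d.testBit p).toNat + 4 * (c.testBit p).toNat + 2 * (b.testBit p).toNat + (a.testBit p).toNat

theorem CInv_step (p n s d c b a x : ℕ) (h : CInv p n s d c b a) :
    CInv p ((x.testBit p).toNat + n) (Nat.lor s (Nat.land d (Nat.land c (Nat.land b (Nat.land a x)))))
        (Nat.xor d (Nat.land c (Nat.land b (Nat.land a x))))
        (Nat.xor c (Nat.land b (Nat.land a x)))
        (Nat.xor b (Nat.land a x)) (Nat.xor a x) := by
  intro hn
  obtain ⟨h1, h2⟩ := h (by omega)
  have e1 : ∀ x y, Nat.land x y = x &&& y := fun _ _ => rfl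
  have e2 : ∀ x y, Nat.lor x y = x ||| y := fun _ _ => rfl
  have e3 : ∀ x y, Nat.xor x y = x ^^^ y := fun _ _ => rfl
  simp only [e1, e2, e3, Nat.testBit_and, Nat.testBit_or, Nat.testBit_xor, h1]
  subst h2
  revert hn
  cases x.testBit p <;> cases a.testBit p <;> cases b.testBit p <;> cases c.testBit p <;>
    cases d.testBit p <;> simp

theorem cntK_spec (l : List ℕ) (s d c b a : ℕ) : ∃ s' d' c' b' a',
    (∀ {α : Type} (k : ℕ → ℕ → ℕ → ℕ → ℕ → α), cntK k l s d c b a = k s' d' c' b' a') ∧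
    ∀ p n, CInv p n s d c b a → CInv p (pc l.length (wordAt p l) + n) s' d' c' b' a' := by
  induction l generalizing s d c b a with
  | nil => exact ⟨s, d, c, b, a, fun k => rfl, fun p n h => by simpa [pc] using h⟩
  | cons x l ih =>
    obtain ⟨s', d', c', b', a', h1, h2⟩ := ih
      (Nat.lor s (Nat.land d (Nat.land c (Nat.land b (Nat.land a x)))))
        (Nat.xor d (Nat.land c (Nat.land b (Nat.land a x))))
        (Nat.xor c (Nat.land b (Nat.land a x)))
        (Nat.xor b (Nat.land a x)) (Nat.xor a x)
    refine ⟨s', d', c', b', a', fun k => h1 k, fun p n h => ?_⟩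
    have := h2 p _ (CInv_step p n s d c b a x h)
    rw [List.length_cons, pc_succ, wordAt_cons, tb0, sh1]
    rwa [add_comm (x.testBit p).toNat, add_assoc]

/-! Extraction of the hits. -/

theorem ext_spec (P : ℕ → Bool) (d m off : ℕ) (h : ext P d m off = true) (c : ℕ)
    (hc : c < 2 ^ d) (hm : m.testBit c = true) : P (off + c) = true := by
  induction d generalizing m off c with
  | zero =>
    have : c = 0 := by simpa using hc
    subst this
    have h' : cond (Nat.beq m 0) true (P off) = true := h
    cases h1 : Nat.beq m 0
    · rw [h1] at h'; exact h'
    · rw [Nat.eq_of_beq_eq_true h1] at hm; simp at hm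
  | succ d ih =>
    have h' : frc m (fun m => cond (Nat.beq m 0) true
      (cond (ext P d (m % (2 ^ (2 ^ d))) off)
        (ext P d (m >>> (2 ^ d)) (off + 2 ^ d)) false)) = true := h
    rw [frc_eq] at h'
    cases h1 : Nat.beq m 0
    · rw [h1] at h'
      simp only [cond_false] at h'
      cases h2 : ext P d (m % (2 ^ (2 ^ d))) off
      · rw [h2] at h'; exact absurd h' Bool.false_ne_true
      · rw [h2] at h'
        simp only [cond_true] at h'
        by_cases hlt : c < 2 ^ d
        · apply ih _ _ h2 c hlt
          rw [Nat.testBit_mod_two_pow, hm]; simp [hlt]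
        · have := ih _ _ h' (c - 2 ^ d) (by rw [pow_succ] at hc; omega)
            (by rw [testBit_shr, Nat.add_sub_cancel' (by omega)]; exact hm)
          rwa [add_assoc, Nat.add_sub_cancel' (by omega)] at this
    · rw [Nat.eq_of_beq_eq_true h1] at hm; simp at hm

/-! Families of small subsets. -/

/-- subsets of size exactly `a` of `[n]` as masks -/
def subE : ℕ → ℕ → List ℕ
  | _, 0 => [0]
  | 0, _ + 1 => []
  | n + 1, a + 1 => (subE n (a + 1)).map (fun m => 2 * m) ++ (subE n a).map (fun m => 2 * m + 1)

theorem pc_eq_zero (n t : ℕ) (ht : t < 2 ^ n) (h : pc n t = 0) : t = 0 := by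
  induction n generalizing t with
  | zero => simpa using ht
  | succ n ih =>
    rw [pc_succ] at h
    have h1 := ih (t >>> 1) (by rw [Nat.shiftRight_eq_div_pow]; rw [pow_succ] at ht; omega) (by omega)
    rw [decomp t, h1]; omega

theorem subE_spec (n a t : ℕ) (ht : t < 2 ^ n) (h : pc n t = a) : t ∈ subE n a := by
  induction n generalizing a t with
  | zero =>
    have : t = 0 := by simpa using ht
    subst this
    simp only [pc, range_zero, sum_empty] at h
    subst h
    simp [subE]
  | succ n ih =>
    cases a with
    | zero =>
      rw [pc_eq_zero _ _ ht h]; simp [subE]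
    | succ a =>
      have hs : t >>> 1 < 2 ^ n := by rw [Nat.shiftRight_eq_div_pow]; rw [pow_succ] at ht; omega
      rw [pc_succ] at h
      have hd := decomp t
      rw [subE, List.mem_append, List.mem_map, List.mem_map]
      cases hb : t.testBit 0
      · rw [hb] at h hd
        exact Or.inl ⟨t >>> 1, ih _ _ hs (by simpa using h), by simp at hd; omega⟩
      · rw [hb] at h hd
        refine Or.inr ⟨t >>> 1, ih _ _ hs (by simp at h; omega), by simp at hd; omega⟩

def t1s : ℕ → List ℕ
  | 0 => [0]
  | a + 1 => (subE 18 a).map (fun m => 2 * m + 1)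

theorem t1s_spec (a t : ℕ) (ht : t < 2 ^ 19) (h : pc 19 t = a) (h0 : t = 0 ∨ t.testBit 0 = true) :
    t ∈ t1s a := by
  rcases h0 with rfl | h0
  · have : a = 0 := by rw [← h]; simp [pc]
    subst this; simp [t1s]
  · rw [pc_succ, h0] at h
    cases a with
    | zero => simp at h
    | succ a =>
      have hs : t >>> 1 < 2 ^ 18 := by rw [Nat.shiftRight_eq_div_pow]; omega
      have hd := decomp t
      rw [h0] at hd
      rw [t1s, List.mem_map]
      exact ⟨t >>> 1, subE_spec _ _ _ hs (by simp at h; omega), by simp at hd; omega⟩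

def joinF (q p : List ℕ × ℕ) : List ℕ × ℕ :=
  (Nat.shiftLeft (Nat.sub (Nat.pow 2 p.2) 1) q.2 ::
    List.zipWith (fun x y => Nat.lor x (Nat.shiftLeft y q.2)) q.1 p.1, q.2 + p.2)

def stepF (p : List ℕ × ℕ) : List (List ℕ × ℕ) → List (List ℕ × ℕ)
  | [] => []
  | q :: qs => joinF q p :: stepF q qs

/-- families of all subsets of `[n]` of size `≤ w`, `w = 0..7`, bit-sliced -/
def rowF : ℕ → List (List ℕ × ℕ)
  | 0 => List.replicate 8 ([], 1)
  | n + 1 => stepF (List.replicate n 0, 0) (rowF n)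

def fam (w : ℕ) : List ℕ × ℕ := (rowF 19).getD w ([], 0)

/-- `f` lists all the subsets of `[n]` of size `< w` -/
structure Cov (n w : ℕ) (f : List ℕ × ℕ) : Prop where
  len : f.1.length = n
  lt : ∀ x ∈ f.1, x < 2 ^ f.2
  cov : ∀ t, t < 2 ^ n → pc n t < w → ∃ c < f.2, wordAt c f.1 = t

theorem wordAt_zip_lo (s c : ℕ) (hc : c < s) (l l' : List ℕ) (h : l.length = l'.length) :
    wordAt c (List.zipWith (fun x y => Nat.lor x (Nat.shiftLeft y s)) l l') = wordAt c l := by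
  induction l generalizing l' with
  | nil => simp
  | cons x l ih =>
    cases l' with
    | nil => simp at h
    | cons y l' =>
      rw [List.zipWith_cons_cons, wordAt_cons, wordAt_cons, ih l' (by simpa using h)]
      have e : (Nat.lor x (Nat.shiftLeft y s)).testBit c = x.testBit c := by
        show (x ||| (y <<< s)).testBit c = _
        rw [Nat.testBit_or, Nat.testBit_shiftLeft]
        simp [show ¬ s ≤ c by omega]
      rw [e]

theorem wordAt_zip_hi (s c : ℕ) (l l' : List ℕ) (h : l.length = l'.length)
    (hl : ∀ x ∈ l, x < 2 ^ s) :
    wordAt (s + c) (List.zipWith (fun x y => Nat.lor x (Nat.shiftLeft y s)) l l') = wordAt c l' := by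
  induction l generalizing l' with
  | nil => cases l' with
    | nil => rfl
    | cons => simp at h
  | cons x l ih =>
    cases l' with
    | nil => simp at h
    | cons y l' =>
      rw [List.zipWith_cons_cons, wordAt_cons, wordAt_cons, ih l' (by simpa using h)
        (fun z hz => hl z (List.mem_cons_of_mem _ hz))]
      have e : (Nat.lor x (Nat.shiftLeft y s)).testBit (s + c) = y.testBit c := by
        show (x ||| (y <<< s)).testBit (s + c) = _
        have hx : x < 2 ^ (s + c) := lt_of_lt_of_le (hl x List.mem_cons_self)
          (Nat.pow_le_pow_right (by norm_num) (by omega))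
        rw [Nat.testBit_or, Nat.testBit_shiftLeft, Nat.testBit_lt_two_pow hx]
        simp
      rw [e]

theorem zip_lt (s r : ℕ) (l l' : List ℕ) (hl : ∀ x ∈ l, x < 2 ^ s) (hl' : ∀ x ∈ l', x < 2 ^ r) :
    ∀ z ∈ List.zipWith (fun x y => Nat.lor x (Nat.shiftLeft y s)) l l', z < 2 ^ (s + r) := by
  induction l generalizing l' with
  | nil => simp
  | cons x l ih =>
    cases l' with
    | nil => simp
    | cons y l' =>
      intro z hz
      rw [List.zipWith_cons_cons, List.mem_cons] at hz
      rcases hz with rfl | hz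
      · show (x ||| (y <<< s)) < _
        apply Nat.or_lt_two_pow
        · exact lt_of_lt_of_le (hl x List.mem_cons_self)
            (Nat.pow_le_pow_right (by norm_num) (by omega))
        · rw [Nat.shiftLeft_eq, add_comm, pow_add]
          exact Nat.mul_lt_mul_of_pos_right (hl' y List.mem_cons_self) (by positivity)
      · exact ih l' (fun z hz => hl z (List.mem_cons_of_mem _ hz))
          (fun z hz => hl' z (List.mem_cons_of_mem _ hz)) z hz

theorem join_cov (n w : ℕ) (q p : List ℕ × ℕ) (hq : Cov n (w + 1) q) (hp : Cov n w p) :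
    Cov (n + 1) (w + 1) (joinF q p) := by
  have ef : Nat.shiftLeft (Nat.sub (Nat.pow 2 p.2) 1) q.2 = (2 ^ p.2 - 1) <<< q.2 := rfl
  have hlen : q.1.length = p.1.length := by rw [hq.len, hp.len]
  refine ⟨?_, ?_, ?_⟩
  · simp [joinF, hq.len, hp.len]
  · intro x hx
    simp only [joinF, List.mem_cons] at hx
    rcases hx with rfl | hx
    · rw [ef]
      show _ < 2 ^ (q.2 + p.2)
      rw [Nat.shiftLeft_eq, add_comm, pow_add]
      refine Nat.mul_lt_mul_of_pos_right ?_ (by positivity)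
      have : 0 < 2 ^ p.2 := by positivity
      omega
    · exact zip_lt _ _ _ _ hq.lt hp.lt x hx
  · intro t ht hpc
    have hs : t >>> 1 < 2 ^ n := by rw [Nat.shiftRight_eq_div_pow]; rw [pow_succ] at ht; omega
    rw [pc_succ] at hpc
    have hd := decomp t
    cases hb : t.testBit 0
    · rw [hb] at hpc hd
      obtain ⟨c, hc, hw⟩ := hq.cov (t >>> 1) hs (by simpa using hpc)
      refine ⟨c, by simp only [joinF]; omega, ?_⟩
      simp only [joinF]
      rw [wordAt_cons, wordAt_zip_lo _ _ hc _ _ hlen, hw, ef, Nat.testBit_shiftLeft]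
      simp only [show ¬ q.2 ≤ c by omega, decide_false, Bool.false_and, ge_iff_le]
      exact hd.symm
    · rw [hb] at hpc hd
      obtain ⟨c, hc, hw⟩ := hp.cov (t >>> 1) hs (by simp at hpc; omega)
      refine ⟨q.2 + c, by simp only [joinF]; omega, ?_⟩
      simp only [joinF]
      rw [wordAt_cons, wordAt_zip_hi _ _ _ _ hlen hq.lt, hw, ef, Nat.testBit_shiftLeft]
      simp only [ge_iff_le, Nat.le_add_right, decide_true, Bool.true_and, Nat.add_sub_cancel_left,
        Nat.testBit_two_pow_sub_one, hc]
      exact hd.symm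

theorem step_cov (n w : ℕ) (p : List ℕ × ℕ) (qs : List (List ℕ × ℕ)) (hp : Cov n w p)
    (hq : ∀ i (hi : i < qs.length), Cov n (w + i + 1) qs[i]) :
    ∀ i (hi : i < (stepF p qs).length), Cov (n + 1) (w + i + 1) (stepF p qs)[i] := by
  induction qs generalizing p w with
  | nil => intro i hi; simp [stepF] at hi
  | cons q qs ih =>
    intro i hi
    have hq0 : Cov n (w + 1) q := hq 0 (by simp)
    cases i with
    | zero => exact join_cov n w q p hq0 hp
    | succ i =>
      have := ih (w + 1) q hq0 (fun i hi => by
        have := hq (i + 1) (by simpa using hi)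
        rw [show w + 1 + i + 1 = w + (i + 1) + 1 by omega]
        exact this) i (by simpa [stepF] using hi)
      rw [show w + (i + 1) + 1 = w + 1 + i + 1 by omega]
      exact this

theorem step_length (p : List ℕ × ℕ) (qs : List (List ℕ × ℕ)) :
    (stepF p qs).length = qs.length := by
  induction qs generalizing p with
  | nil => rfl
  | cons q qs ih => simp [stepF, ih]

theorem row_length (n : ℕ) : (rowF n).length = 8 := by
  induction n with
  | zero => simp [rowF]
  | succ n ih => rw [rowF, step_length, ih]

theorem row_cov (n : ℕ) : ∀ i (hi : i < (rowF n).length), Cov n (0 + i + 1) (rowF n)[i] := by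
  induction n with
  | zero =>
    intro i hi
    simp only [rowF, List.getElem_replicate]
    refine ⟨rfl, by simp, fun t ht _ => ⟨0, by norm_num, ?_⟩⟩
    have : t = 0 := by simpa using ht
    rw [this]; rfl
  | succ n ih =>
    apply step_cov n 0 _ _ _ ih
    refine ⟨by simp, ?_, fun t _ h => absurd h (by omega)⟩
    intro x hx
    rw [List.eq_of_mem_replicate hx]; norm_num

theorem fam_cov (w : ℕ) (hw : w < 8) : Cov 19 (w + 1) (fam w) := by
  have h : w < (rowF 19).length := by rw [row_length]; exact hw
  rw [fam, List.getD_eq_getElem _ _ h]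
  have := row_cov 19 w h
  rwa [zero_add] at this

/-! The main check. -/

noncomputable def Qs (V : List ℕ) (cols2 : List ℕ) : List ℕ :=
  (List.range 38).map (fun j => xorSel V (wordAt j cols2))

theorem testBit_wordAt (c j : ℕ) (l : List ℕ) :
    (wordAt c l).testBit j = (l.getD j 0).testBit c := by
  induction l generalizing j with
  | nil => simp [wordAt_nil]
  | cons q l ih =>
    cases j with
    | zero => rw [wordAt_cons, tb0]; rfl
    | succ j =>
      rw [add_comm, ← testBit_shr, wordAt_cons, sh1, ih, add_comm]; rfl

theorem wordAt_Qs (V cols2 : List ℕ) (h : V.length = cols2.length) (c : ℕ) :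
    wordAt c (Qs V cols2) = xorSel cols2 (wordAt c V) % 2 ^ 38 := by
  apply Nat.eq_of_testBit_eq
  intro j
  rw [testBit_wordAt, Nat.testBit_mod_two_pow]
  by_cases hj : j < 38
  · rw [List.getD_eq_getElem _ _ (by simpa [Qs] using hj)]
    simp only [Qs, List.getElem_map, List.getElem_range, transpose V cols2 h, hj, decide_true,
      Bool.true_and]
  · rw [List.getD_eq_default _ _ (by simpa [Qs] using hj)]
    simp [hj]

noncomputable def goodW (T : BT) (m : ℕ) : Bool :=
  frc m (fun m => cond (Nat.beq m 0) true (frc (canonA 18 m m) (memT T)))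

theorem goodW_spec (T : BT) (m : ℕ) (h : goodW T m = true) :
    m = 0 ∨ ∃ i, rotN^[i] m ∈ T.toList := by
  rw [goodW, frc_eq] at h
  cases h1 : Nat.beq m 0
  · rw [h1] at h
    simp only [cond_false, frc_eq] at h
    have := memT_spec _ _ h
    rcases canonA_spec 18 m m with h2 | ⟨i, h2⟩
    · exact Or.inr ⟨0, by rw [h2] at this; exact this⟩
    · exact Or.inr ⟨i, by rw [h2] at this; exact this⟩
  · exact Or.inl (Nat.eq_of_beq_eq_true h1)

noncomputable def passB (T : BT) (o0 o1 o2 : ℕ) (V : List ℕ) (ons : ℕ) (Q : List ℕ) (t1 F : ℕ)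
    (s d c b a : ℕ) : Bool :=
  cntK (fun s _ _ _ _ =>
    ext (fun k => goodW T (Nat.add (Nat.shiftLeft t1 o0) (Nat.add (Nat.shiftLeft (wordAt k V) o1)
       (Nat.shiftLeft (wordAt k (flipL ons Q F)) o2)))) 17 (Nat.xor ons (Nat.land s ons)) 0)
    (flipL ons Q F) s d c b a

noncomputable def chkA (T : BT) (o0 o1 o2 : ℕ) (cols1 V : List ℕ) (ons : ℕ)
    (Q : List ℕ) (T1 : List ℕ) (a : ℕ) : Bool :=
  cntK (fun s d c b a =>
    allL (fun t1 => cond (passB T o0 o1 o2 V ons Q t1 (xorSel cols1 t1) s d c b a)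
      (passB T o0 o1 o2 V ons Q t1 (Nat.xor (xorSel cols1 t1) 274877906943) s d c b a) false) T1)
    V 0 0 (cond (bt (a+1) 2) ons 0) (cond (bt (a+1) 1) ons 0) (cond (bt (a+1) 0) ons 0)

noncomputable def chk (T : BT) (o0 o1 o2 : ℕ) (cols1 cols2 : List ℕ) (a : ℕ) : Bool :=
  cond (Nat.ble (fam (7 - a)).2 131072)
    (chkA T o0 o1 o2 cols1 (fam (7 - a)).1 (2 ^ (fam (7 - a)).2 - 1) (Qs (fam (7 - a)).1 cols2)
      (t1s a) a) false

theorem pass_spec (T : BT) (o0 o1 o2 : ℕ) (V : List ℕ) (len : ℕ) (Q : List ℕ) (t1 F : ℕ)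
    (s d c b a : ℕ) (h : passB T o0 o1 o2 V (2 ^ len - 1) Q t1 F s d c b a = true)
    (hlen : len ≤ 131072) (p : ℕ) (hp : p < len) (n : ℕ) (hn : CInv p n s d c b a)
    (rr : ℕ) (hrr : wordAt p Q ^^^ (F % 2 ^ Q.length) = rr) (hw : pc Q.length rr + n ≤ 15) :
    goodW T (t1 <<< o0 + ((wordAt p V) <<< o1 + rr <<< o2)) = true := by
  have hons : (2 ^ len - 1).testBit p = true := by
    rw [Nat.testBit_two_pow_sub_one]; simp [hp]
  obtain ⟨s', d', c', b', a', h1, h2⟩ := cntK_spec (flipL (2 ^ len - 1) Q F) s d c b a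
  unfold passB at h
  rw [h1] at h
  have h3 := h2 p n hn
  rw [flip_length, wordAt_flip _ _ hons, hrr] at h3
  have h4 := (h3 hw).1
  have h5 := ext_spec _ _ _ _ h p (by omega) (by
    show ((2 ^ len - 1) ^^^ (s' &&& (2 ^ len - 1))).testBit p = true
    rw [Nat.testBit_xor, Nat.testBit_and, hons, h4]; rfl)
  rw [zero_add, wordAt_flip _ _ hons, hrr] at h5
  exact h5

theorem chk_spec (T : BT) (o0 o1 o2 : ℕ) (cols1 cols2 : List ℕ) (a : ℕ) (ha : a ≤ 3)
    (h : chk T o0 o1 o2 cols1 cols2 a = true) (hc2 : cols2.length = 19)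
    (t1 t2 rr : ℕ) (ht1 : t1 < 2 ^ 19) (ht2 : t2 < 2 ^ 19) (hrr : rr < 2 ^ 38)
    (hpa : pc 19 t1 = a) (h0 : t1 = 0 ∨ t1.testBit 0 = true) (h7 : a + pc 19 t2 ≤ 7)
    (h14 : a + pc 19 t2 + pc 38 rr ≤ 14)
    (hx : xorSel cols1 t1 ^^^ (xorSel cols2 t2 ^^^ rr) = 0 ∨
      xorSel cols1 t1 ^^^ (xorSel cols2 t2 ^^^ rr) = 274877906943) :
    t1 <<< o0 + (t2 <<< o1 + rr <<< o2) = 0 ∨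
      ∃ i, rotN^[i] (t1 <<< o0 + (t2 <<< o1 + rr <<< o2)) ∈ T.toList := by
  apply goodW_spec
  have hcov := fam_cov (7 - a) (by omega)
  obtain ⟨p, hp, hpt⟩ := hcov.cov t2 ht2 (by omega)
  unfold chk at h
  generalize fam (7 - a) = f at *
  obtain ⟨V, len⟩ := f
  simp only at *
  cases hl : Nat.ble len 131072
  · rw [hl] at h; exact absurd h Bool.false_ne_true
  rw [hl, cond_true] at h
  have hlen := Nat.le_of_ble_eq_true hl
  have hons : (2 ^ len - 1).testBit p = true := by
    rw [Nat.testBit_two_pow_sub_one]; simp [hp]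
  unfold chkA at h
  obtain ⟨s', d', c', b', a', h1, h2⟩ := cntK_spec V 0 0 (cond (bt (a+1) 2) (2 ^ len - 1) 0)
    (cond (bt (a+1) 1) (2 ^ len - 1) 0) (cond (bt (a+1) 0) (2 ^ len - 1) 0)
  rw [h1] at h
  have hinit : CInv p (a + 1) 0 0 (cond (bt (a+1) 2) (2 ^ len - 1) 0)
    (cond (bt (a+1) 1) (2 ^ len - 1) 0) (cond (bt (a+1) 0) (2 ^ len - 1) 0) := by
    intro _
    have e : ∀ b : Bool, (cond b (2 ^ len - 1) 0).testBit p = b := by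
      intro b; cases b
      · simp
      · exact hons
    rw [e, e, e]
    refine ⟨by simp, ?_⟩
    clear * - ha
    interval_cases a <;> simp [bt] <;> decide
  have h3 := h2 p _ hinit
  have h4 := allL_spec _ _ h t1 (t1s_spec a t1 ht1 hpa h0)
  rw [hcov.len, hpt] at h3
  have hQl : (Qs V cols2).length = 38 := by simp [Qs]
  have hQ : wordAt p (Qs V cols2) = xorSel cols2 t2 % 2 ^ 38 := by
    rw [wordAt_Qs _ _ (by rw [hcov.len, hc2]), hpt]
  rw [← hpt]
  have modx : ∀ x y : ℕ, (x % 2 ^ 38) ^^^ (y % 2 ^ 38) = (x ^^^ y) % 2 ^ 38 := by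
    intro x y; rw [Nat.xor_mod_two_pow]
  cases h5 : passB T o0 o1 o2 V (2 ^ len - 1) (Qs V cols2) t1 (xorSel cols1 t1) s' d' c' b' a'
  · rw [h5] at h4; exact absurd h4 Bool.false_ne_true
  rw [h5, cond_true] at h4
  rcases hx with hx | hx
  · refine pass_spec T o0 o1 o2 V len (Qs V cols2) t1 _ s' d' c' b' a' h5 hlen p hp _ h3 rr ?_ ?_
    · rw [hQl, hQ, modx]
      have : xorSel cols2 t2 ^^^ xorSel cols1 t1 = rr := by
        rw [← Nat.xor_assoc, Nat.xor_eq_zero_iff] at hx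
        rw [Nat.xor_comm, hx]
      rw [this, Nat.mod_eq_of_lt hrr]
    · rw [hQl]; omega
  · refine pass_spec T o0 o1 o2 V len (Qs V cols2) t1 _ s' d' c' b' a' h4 hlen p hp _ h3 rr ?_ ?_
    · rw [hQl, hQ, modx]
      have : xorSel cols2 t2 ^^^ Nat.xor (xorSel cols1 t1) 274877906943 = rr := by
        show xorSel cols2 t2 ^^^ ((xorSel cols1 t1) ^^^ 274877906943) = rr
        rw [← hx]
        apply Nat.eq_of_testBit_eq
        intro i
        simp only [Nat.testBit_xor]
        cases (xorSel cols2 t2).testBit i <;> cases (xorSel cols1 t1).testBit i <;> simp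
      rw [this, Nat.mod_eq_of_lt hrr]
    · rw [hQl]; omega

/-! ### The data -/

/-- rows `(e_k | A_k)` -/
def HL : List ℕ := [
  50781748624777696772097, 26005777638829145980930, 52011555277658291961860, 28465246829677138411528,
  56930493659354276823056, 38303123593069108133920, 1048527575411968704576, 2096911035910739460224,
  4193822071821478920448, 8387644143642957840896, 16775144172372717732864, 33550144229832237516800,
  67100144344751277084672, 58642424963863108657152, 41726986202086771802112, 7896252793447296040960,
  15792505586894592081920, 31584867058875986214912, 63169734117751972429824, 16005179028667200176128,
  32010358057334400352256, 64020716114668800704512, 52483568503698155896832, 29409273281756866281472,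
  58818402448600534614016, 42078941171561623715840, 8600162732396999868416, 17200181349880801787904,
  34400362699761603575808, 68800725399523207151616, 62043587073406968791040, 48529310421174492069888,
  21500757116709538627584, 43001514233419077255168, 10445164741198708998144, 20890185367484220047360,
  41780226620055242145792, 8002589514471038779392]

/-- rows `(A^T_j | e_j)` -/
def HR : List ℕ := [
  540289432744, 805701482832, 1336525058721, 2398172734786,
  4521468086916, 9042935649545, 17810993392147, 35347108877351,
  70419339847759, 140838679171231, 281677358342462, 563079839302268,
  1126159678080249, 2252044478777842, 4503814079648741, 9007353281914826,
  18014431685922709, 36028863371845418, 72057726743690836, 144115350324174955,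
  288230425770967254, 576460851541934508, 1152921703083869016, 2305843131289831089,
  4611686262579137891, 9223372250280368839, 18446744225683355022, 36893488176489327388,
  73786976352978654776, 147573952705957309552, 295147905411914619104, 590295810548951855552,
  1180591620823025804161, 2361183241646051084035, 4722366483017224785414, 9444732965759571663885,
  18889465931519143327770, 37778931863038286131253]

def HR0 : ℕ := 540289432744

def HL0 : ℕ := 50781748624777696772097

/-- representatives of the words of weight 14 up to rotation -/
def allT : BT := (.nd (.nd (.nd (.nd (.nd (.nd (.nd (.nd (.nd (.nd .lf 64055154871592 .lf) 607207760134149 .lf) 916374227043588 (.nd (.nd .lf 1136276954767366 .lf) 1988202144477440 .lf)) 10363189236072454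
  (.nd (.nd (.nd .lf 144119614127789328 .lf) 144126401699418144 .lf) 144197378784707176 (.nd (.nd .lf 144397771301211147 .lf) 144401423224801414 .lf))) 144541250140373126
  (.nd (.nd (.nd (.nd .lf 144695769052645380 .lf) 144783872080519552 .lf) 145646156045652096 (.nd (.nd .lf 146413236281946634 .lf) 146518172902742017 .lf)) 146965229857734717
  (.nd (.nd (.nd .lf 148624286402425940 .lf) 148830996411778560 .lf) 148972973523525698 (.nd (.nd .lf 149195001289511296 .lf) 149498966090203716 .lf)))) 149749133178585612
  (.nd (.nd (.nd (.nd (.nd .lf 150870669662881155 .lf) 152277963561771076 .lf) 155394125498482946 (.nd (.nd .lf 155942325494759428 .lf) 158892744625160226 .lf)) 162129713291546625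
  (.nd (.nd (.nd .lf 162188002453362192 .lf) 162201763520252992 .lf) 162754754521333776 (.nd (.nd .lf 164417705788702858 .lf) 165841679577448960 .lf))) 166722053448156224
  (.nd (.nd (.nd (.nd .lf 171136792870029364 .lf) 171139053628985993 .lf) 180189069366545614 (.nd (.nd .lf 180219026833760546 .lf) 180725085854830977 .lf)) 182677271193069682
  (.nd (.nd (.nd .lf 182686073779405444 .lf) 184934695368198720 .lf) 184966443204510464 (.nd .lf 189186717697208324 .lf))))) 196189262431916291
  (.nd (.nd (.nd (.nd (.nd (.nd .lf 207166708158437952 .lf) 216173617494402104 .lf) 216209427381093393 (.nd (.nd .lf 216237105696745744 .lf) 216524763365910705 .lf)) 216740954766453952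
  (.nd (.nd (.nd .lf 216894628811628640 .lf) 218437939552880704 .lf) 220685762520195459 (.nd (.nd .lf 220962001378738432 .lf) 225180148878673418 .lf))) 230107993047302412
  (.nd (.nd (.nd (.nd .lf 234231298551468164 .lf) 234786144280379913 .lf) 252258753743686234 (.nd (.nd .lf 252272514844135434 .lf) 253345093309894656 .lf)) 261349515911247424
  (.nd (.nd (.nd .lf 432434763484319808 .lf) 432934919646421540 .lf) 438257125673668656 (.nd (.nd .lf 438680968245952512 .lf) 439120772092725764 .lf)))) 450430743826416688
  (.nd (.nd (.nd (.nd (.nd .lf 451209335554588737 .lf) 459510150046679744 .lf) 475270499522317024 (.nd (.nd .lf 508907898476429394 .lf) 720593816435935363 .lf)) 720721101971391523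
  (.nd (.nd (.nd .lf 720936651119198784 .lf) 727331890971312768 .lf) 743165170834149376 (.nd (.nd .lf 756604747344773394 .lf) 757946146416183360 .lf))) 759511850706534980
  (.nd (.nd (.nd (.nd .lf 788130390333195776 .lf) 792704006248007715 .lf) 795166827159357600 (.nd (.nd .lf 811825235539263504 .lf) 1008878035086083072 .lf)) 1008949255207916748
  (.nd (.nd (.nd .lf 1011341386634494508 .lf) 1047124850810912771 .lf) 1080867141595496448 (.nd .lf 1297054529699236128 .lf)))))) 1297320678135112728
  (.nd (.nd (.nd (.nd (.nd (.nd (.nd .lf 1298400225792106496 .lf) 1303806454528037896 .lf) 1308305381200503301 (.nd (.nd .lf 1342231293844824584 .lf) 1353340761152171040 .lf)) 1355725669532696832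
  (.nd (.nd (.nd .lf 1369147339012972548 .lf) 1382755860438065536 .lf) 1387181290746683392 (.nd (.nd .lf 1409662460478161696 .lf) 1414774616538742784 .lf))) 1585461717570682896
  (.nd (.nd (.nd (.nd .lf 1594309479339151368 .lf) 1594485374705468160 .lf) 1603564179440189456 (.nd (.nd .lf 1605641304956469248 .lf) 1621366255135102080 .lf)) 1948123704412381216
  (.nd (.nd (.nd .lf 2185582829742621200 .lf) 2451515656853192740 .lf) 2455589076118667312 (.nd (.nd .lf 2468113960537882752 .lf) 2471429495253506306 .lf)))) 2486338915357716609
  (.nd (.nd (.nd (.nd (.nd .lf 2489390536847263008 .lf) 2491203111890194944 .lf) 2505691496947122753 (.nd (.nd .lf 2522017526628822144 .lf) 2531198951105954819 .lf)) 2545694910250570784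
  (.nd (.nd (.nd .lf 2738207299600253249 .lf) 2740441481369887392 .lf) 2747301326351630929 (.nd (.nd .lf 2810247421911635206 .lf) 3031064386225580370 .lf))) 3053441922560590112
  (.nd (.nd (.nd (.nd .lf 3603091920601092108 .lf) 3605414113334804496 .lf) 3611958120904396800 (.nd (.nd .lf 3674944442969623872 .lf) 3674974267583464448 .lf)) 3892317622062023937
  (.nd (.nd (.nd .lf 4179916617636939296 .lf) 4755818867681671396 .lf) 4755891676801730881 (.nd .lf 4756223798066634753 .lf))))) 4756523448225320960
  (.nd (.nd (.nd (.nd (.nd (.nd .lf 4756971095482980128 .lf) 4757074992343027719 .lf) 4760445562954731917 (.nd (.nd .lf 4760458880633802240 .lf) 4762285095302332673 .lf)) 4765413171533974688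
  (.nd (.nd (.nd .lf 4767623258739081548 .lf) 4770719799061807176 .lf) 4771780408993124384 (.nd (.nd .lf 4783948725649277358 .lf) 4791973027041589248 .lf))) 4793039466648437017
  (.nd (.nd (.nd (.nd .lf 4794082426307838592 .lf) 4836949889365606403 .lf) 4867271447691657224 (.nd (.nd .lf 4881902309669372084 .lf) 4882605694290825472 .lf)) 5044049862207799650
  (.nd (.nd (.nd .lf 5048573820085240320 .lf) 5333391229994926145 .lf) 5333981597299384384 (.nd (.nd .lf 5336202962815950980 .lf) 5337047218262122880 .lf)))) 5341559430206029990
  (.nd (.nd (.nd (.nd (.nd .lf 5368926278579782400 .lf) 5407702767311525921 .lf) 5440774961453402368 (.nd (.nd .lf 5912111545566892816 .lf) 5962765924288479504 .lf)) 6017020212833961985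
  (.nd (.nd (.nd .lf 6201461265460627480 .lf) 6521234272341200961 .lf) 7062137278231490816 (.nd (.nd .lf 7062349002943034372 .lf) 7070655264470868672 .lf))) 7097972269147226177
  (.nd (.nd (.nd (.nd .lf 7117950901960066064 .lf) 7125327930818824448 .lf) 7133701948938922514 (.nd (.nd .lf 7170012081819096070 .lf) 7386189304055275520 .lf)) 8239898468865278176
  (.nd (.nd (.nd .lf 8268653448272019488 .lf) 8286625650825546760 .lf) 8288453451474617856 (.nd .lf 8792750506948690960 .lf))))))) 9368085429418726152
  (.nd (.nd (.nd (.nd (.nd (.nd (.nd (.nd .lf 9368261375654641664 .lf) 9372013927267042432 .lf) 9372063392328950852 (.nd (.nd .lf 9372281147173118593 .lf) 9377621436490863809 .lf)) 9378891909407459360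
  (.nd (.nd (.nd .lf 9385506230011723842 .lf) 9386240496865446914 .lf) 9404923432810332225 (.nd (.nd .lf 9439971503570026530 .lf) 9444057223356760596 .lf))) 9656016943681974784
  (.nd (.nd (.nd (.nd .lf 9656350962730717257 .lf) 9657406460669264640 .lf) 9697379745993859840 (.nd (.nd .lf 9943961870379524642 .lf) 9945073881043042310 .lf)) 9948737737983098888
  (.nd (.nd (.nd .lf 9950713823278202896 .lf) 9955636129443088392 .lf) 9979979120382050664 (.nd (.nd .lf 10276106041947623425 .lf) 10520619999129895204 .lf)))) 10536176311738042370
  (.nd (.nd (.nd (.nd (.nd .lf 10538431943471539048 .lf) 10538987798169387027 .lf) 10539584899663814672 (.nd (.nd .lf 10574459089078714402 .lf) 10813178267813544520 .lf)) 11677833859709472775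
  (.nd (.nd (.nd .lf 11685158780508651616 .lf) 11700637842957926407 .lf) 11713871633042381348 (.nd (.nd .lf 11799993973798490250 .lf) 11963816911814393922 .lf))) 12837528536298292369
  (.nd (.nd (.nd (.nd .lf 13979173326313162800 .lf) 13979332676856086557 .lf) 13995078779706441776 (.nd (.nd .lf 13997188262515982602 .lf) 14087277716264976394 .lf)) 14087330041816809729
  (.nd (.nd (.nd .lf 14272083298300731460 .lf) 14285453756712626692 .lf) 16304194220132927520 (.nd .lf 16575665692817238048 .lf))))) 18590876904077131785
  (.nd (.nd (.nd (.nd (.nd (.nd .lf 18591300183463691017 .lf) 18596137230930018308 .lf) 18597614868493250573 (.nd (.nd .lf 18597685580030566674 .lf) 18614135923164315648 .lf)) 18628086878670159980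
  (.nd (.nd (.nd .lf 18629142197236226432 .lf) 18647172399096733716 .lf) 18664046331291173891 (.nd (.nd .lf 18881364115247334662 .lf) 18898229975343964576 .lf))) 18917423089727963680
  (.nd (.nd (.nd (.nd .lf 18919624646464765974 .lf) 19167759973896187908 .lf) 19181956713028787040 (.nd (.nd .lf 19203912895474730049 .lf) 19745188158593043589 .lf)) 19748293299619909713
  (.nd (.nd (.nd .lf 19784456168817037392 .lf) 19843007329264992272 .lf) 19865380709422112769 (.nd (.nd .lf 20032222251595338052 .lf) 20068092735448942730 .lf)))) 20123209327257346052
  (.nd (.nd (.nd (.nd (.nd .lf 20905711163863466128 .lf) 20921477566579097868 .lf) 20924007543068688520 (.nd (.nd .lf 20981436409471894016 .lf) 21005501695380163728 .lf)) 21564501655463921824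
  (.nd (.nd (.nd .lf 23203120326003398672 .lf) 23207129187172484228 .lf) 23207224810307727396 (.nd (.nd .lf 23213808969924493458 .lf) 23242268438457008193 .lf))) 23526962920531689993
  (.nd (.nd (.nd (.nd .lf 28102472756898725952 .lf) 28156562044958577668 .lf) 28175718286398390532 (.nd (.nd .lf 28426735418035142688 .lf) 29021477478198297092 .lf)) 29633975823496644640
  (.nd (.nd (.nd .lf 29834184242671648769 .lf) 32426563830108293120 .lf) 33291189554598908420 (.nd .lf 37037603753017280544 .lf)))))) 37040497286743589440
  (.nd (.nd (.nd (.nd (.nd (.nd (.nd .lf 37042129771497193986 .lf) 37042388685933397252 .lf) 37047455019844284416 (.nd (.nd .lf 37047754354879398144 .lf) 37048881034999923202 .lf)) 37051254980314402872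
  (.nd (.nd (.nd .lf 37055680414776042113 .lf) 37082684566767140888 .lf) 37083204764280350721 (.nd (.nd .lf 37091936812026990592 .lf) 37109901173092258052 .lf))) 37145707320424398874
  (.nd (.nd (.nd (.nd .lf 37146886550347579408 .lf) 37165185214468587528 .lf) 37325983803842529432 (.nd (.nd .lf 37326123725018411520 .lf) 37345616125665345544 .lf)) 37650132742114347013
  (.nd (.nd (.nd .lf 37651218815057989896 .lf) 37687256446556756608 .lf) 37695698539787616512 (.nd (.nd .lf 37904850021106319617 .lf) 38226650402868887632 .lf)))) 38244586727883767842
  (.nd (.nd (.nd (.nd (.nd .lf 38265116260028258328 .lf) 38607248543392202880 .lf) 38768112454528403586 (.nd (.nd .lf 39344153198094975072 .lf) 39348201251471622400 .lf)) 39425646663068287056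
  (.nd (.nd (.nd .lf 39638999470524669952 .lf) 39640758688059230225 .lf) 39922158967726802328 (.nd (.nd .lf 40497810512208199809 .lf) 41649553307581022448 .lf))) 42261924075286889097
  (.nd (.nd (.nd (.nd .lf 42821494127826568194 .lf) 42874294980435903490 .lf) 46261555920940893728 (.nd (.nd .lf 46271122902602506320 .lf) 46284067392874872840 .lf)) 46873476062876008578
  (.nd (.nd (.nd .lf 46911826885116690497 .lf) 47125949436608118786 .lf) 47414283914713772097 (.nd .lf 47418699614682876448 .lf))))) 50884505335132327936
  (.nd (.nd (.nd (.nd (.nd (.nd .lf 50899700593613349216 .lf) 50922206003202163714 .lf) 51521390843921703940 (.nd (.nd .lf 55494093686733611016 .lf) 55818265259986649152 .lf)) 56727991885978668096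
  (.nd (.nd (.nd .lf 58371172397042106386 .lf) 60132344867930013904 .lf) 65005241863965379072 (.nd (.nd .lf 65284322593742029059 .lf) 65870774050901525589 .lf))) 66446109087453151488
  (.nd (.nd (.nd (.nd .lf 73931095928409686824 .lf) 73931188411754094854 .lf) 73931944841718546456 (.nd (.nd .lf 73933345052254811216 .lf) 73933624759206044000 .lf)) 73940243820388191106
  (.nd (.nd (.nd .lf 73940385386572283940 .lf) 73940680677148723200 .lf) 73945165387452334080 (.nd (.nd .lf 73950254046625947904 .lf) 73971708748127289344 .lf)))) 73972481773516391684
  (.nd (.nd (.nd (.nd (.nd .lf 74003159002659197008 .lf) 74004276084979630496 .lf) 74039186672753967652 (.nd (.nd .lf 74040308870003302400 .lf) 74219884817609870086 .lf)) 74221010715442294784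
  (.nd (.nd (.nd .lf 74222857897857515778 .lf) 74239187835156443234 .lf) 74284624260393601026 (.nd (.nd .lf 74507552238092437504 .lf) 74579621429962211504 .lf))) 74581063383914678272
  (.nd (.nd (.nd (.nd .lf 74615788443324207168 .lf) 75103153295676539288 .lf) 75156071751074448897 (.nd (.nd .lf 75158323085800113154 .lf) 75174334569220407329 .lf)) 75372397296375825712
  (.nd (.nd (.nd .lf 75408280973996326913 .lf) 75699916556150243328 .lf) 76238906775605354496 (.nd .lf 76246082996213399832 .lf)))))))) 76273104108801491112
  (.nd (.nd (.nd (.nd (.nd (.nd (.nd (.nd (.nd .lf 76329263004658434306 .lf) 76535586048245244416 .lf) 78551789167497980289 (.nd (.nd .lf 78551824592789569806 .lf) 78553055753268363800 .lf)) 78560793136822846980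
  (.nd (.nd (.nd .lf 78851133631461851136 .lf) 80866653326157816320 .lf) 81146511273178234880 (.nd (.nd .lf 81429620253318579216 .lf) 83154644939209510921 .lf))) 83155318939891023970
  (.nd (.nd (.nd (.nd .lf 83159107858500194321 .lf) 83213020073091137728 .lf) 83228496012788383744 (.nd (.nd .lf 83228797102876320024 .lf) 83445020471114889348 .lf)) 83451736898626689280
  (.nd (.nd (.nd .lf 83731496911522234442 .lf) 84316392309865515014 .lf) 84883986551264116992 (.nd (.nd .lf 85460878933239006208 .lf) 85497462615339712512 .lf)))) 85535178882487459840
  (.nd (.nd (.nd (.nd (.nd .lf 87766787428349772096 .lf) 88919091024064680449 .lf) 92377848102491521632 (.nd (.nd .lf 92423250884459495432 .lf) 92431896939191271457 .lf)) 92451024823352558082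
  (.nd (.nd (.nd .lf 92666105808124256512 .lf) 92954596514408170498 .lf) 93530762283977912326 (.nd (.nd .lf 93532166738762055680 .lf) 93551586759265223217 .lf))) 93603377983315312645
  (.nd (.nd (.nd (.nd .lf 97291368853057699968 .lf) 101646421753587056640 .lf) 107654045595743889416 (.nd (.nd .lf 110824775910875500553 .lf) 110824949895169311786 .lf)) 110826837203195334704
  (.nd (.nd (.nd .lf 110834299323356807824 .lf) 110914944299404624388 .lf) 111124070143753797888 (.nd .lf 111127174028810264578 .lf))))) 111764846790106546186
  (.nd (.nd (.nd (.nd (.nd (.nd .lf 111978698503876018176 .lf) 112073523959311631360 .lf) 113166559197564772865 (.nd (.nd .lf 113455192021546338304 .lf) 114339691933234495520 .lf)) 115445274224888120848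
  (.nd (.nd (.nd .lf 115454282247553680644 .lf) 116013888653576440832 .lf) 120049649330397123588 (.nd (.nd .lf 120066671954580471875 .lf) 121236901975273513989 .lf))) 123524741583224341056
  (.nd (.nd (.nd (.nd .lf 129273083609854509220 .lf) 129311857750804795392 .lf) 148011109754763510028 (.nd (.nd .lf 148013346573470810368 .lf) 148046830601100197890 .lf)) 148294539529836118531
  (.nd (.nd (.nd .lf 148294864982260385792 .lf) 148295091514586984500 .lf) 148318176828830392389 (.nd (.nd .lf 148366587223702372674 .lf) 148583920008287494720 .lf)))) 148585574209491058752
  (.nd (.nd (.nd (.nd (.nd .lf 148586419184711248906 .lf) 148870996025462120581 .lf) 148871270757387932034 (.nd (.nd .lf 148872855188354924576 .lf) 148874372479673435538 .lf)) 149457055505753374849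
  (.nd (.nd (.nd .lf 150028907105243234465 .lf) 150042568331597185026 .lf) 150601498543117583009 (.nd (.nd .lf 151176837041907957793 .lf) 151176841130770703108 .lf))) 151195057970261131592
  (.nd (.nd (.nd (.nd .lf 152329896733261695834 .lf) 152330475352902337824 .lf) 152330917405916137548 (.nd (.nd .lf 152347770462768010320 .lf) 152348335821866272066 .lf)) 152620323985692953088
  (.nd (.nd (.nd .lf 152924248781168984080 .lf) 153501164688323936800 .lf) 153577250895248302084 (.nd .lf 153822697098424885249 .lf)))))) 155509576917317714704
  (.nd (.nd (.nd (.nd (.nd (.nd (.nd .lf 156942566832035995780 .lf) 157022542817036108832 .lf) 157301762969458180998 (.nd (.nd .lf 157519039668489817092 .lf) 157626303897026560064 .lf)) 158097532310799786496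
  (.nd (.nd (.nd .lf 158688838807839670528 .lf) 159265319234076410000 .lf) 159536305020145303556 (.nd (.nd .lf 161553125868507931712 .lf) 162709442698419699712 .lf))) 164435429873741373450
  (.nd (.nd (.nd (.nd .lf 166164823955758843008 .lf) 166167098838374556736 .lf) 166210487857992172672 (.nd (.nd .lf 166759304594897134144 .lf) 170812562057442639876 .lf)) 171641197796593279109
  (.nd (.nd (.nd .lf 171983534040496472576 .lf) 173082341706438936640 .lf) 176005766727686164480 (.nd (.nd .lf 177699656405673839872 .lf) 180001576898546533384 .lf)))) 184611574626290499658
  (.nd (.nd (.nd (.nd (.nd .lf 184612753856312508480 .lf) 184613857237636753409 .lf) 184632455788213831684 (.nd (.nd .lf 184652123628865978384 .lf) 184684247955136315841 .lf)) 184692623005668353060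
  (.nd (.nd (.nd .lf 184922867404166399522 .lf) 185836560312584770176 .lf) 198162896068809850944 (.nd (.nd .lf 203423091568883269649 .lf) 213437162038161836034 .lf))) 222090868265918136399
  (.nd (.nd (.nd (.nd .lf 222424095133274210560 .lf) 224461798996575256576 .lf) 228458708556589301778 (.nd (.nd .lf 230729058299683012641 .lf) 231890626426125157704 .lf)) 239963231863334506532
  (.nd (.nd (.nd .lf 240323546496668533904 .lf) 249179664418572116000 .lf) 258975292041925755969 (.nd .lf 276849815355851800612 .lf))))) 296445225560698912848
  (.nd (.nd (.nd (.nd (.nd (.nd .lf 296447194986328375424 .lf) 296449458760292304964 .lf) 296451715155879856256 (.nd (.nd .lf 296451842407022117920 .lf) 296554822804045307968 .lf)) 296735432879133693953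
  (.nd (.nd (.nd .lf 296744467532213390404 .lf) 297066439179093181488 .lf) 297597889782207545632 (.nd (.nd .lf 297597934295687762138 .lf) 297598813425689993488 .lf))) 297599006873117266128
  (.nd (.nd (.nd (.nd .lf 297599033328150316050 .lf) 297634043907675259332 .lf) 297888768315030601744 (.nd (.nd .lf 297891724016840872096 .lf) 298183340399241203202 .lf)) 298822919999732056592
  (.nd (.nd (.nd .lf 299922567459858809730 .lf) 299923128159658057797 .lf) 300273001968766619656 (.nd (.nd .lf 301056656203021582604 .lf) 303364511730713526282 .lf)))) 304515412199821316834
  (.nd (.nd (.nd (.nd (.nd .lf 304521057397695898144 .lf) 304587490136939824148 .lf) 304808408954551083744 (.nd (.nd .lf 304841905782521073920 .lf) 305091872445289333250 .lf)) 306849242186699014272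
  (.nd (.nd (.nd .lf 309128556742937945096 .lf) 309430097230658797572 .lf) 309777854066692858112 (.nd (.nd .lf 313738782309352023105 .lf) 313756849221283124512 .lf))) 313765791538742698624
  (.nd (.nd (.nd (.nd .lf 314026999651352183808 .lf) 314045025708473862696 .lf) 314893938442016817408 (.nd (.nd .lf 314909718022341268516 .lf) 316044618463522980864 .lf)) 316058118254066679908
  (.nd (.nd (.nd .lf 317198096304477044756 .lf) 318423704463988527748 .lf) 318447313044516126824 (.nd .lf 321269068891141704724 .lf))))))) 334500361474796491009
  (.nd (.nd (.nd (.nd (.nd (.nd (.nd (.nd .lf 335653878364404586512 .lf) 336797194610598224139 .lf) 337103474510159414672 (.nd (.nd .lf 339175377178440319360 .lf) 341446175986393580060 .lf)) 341997181395007440900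
  (.nd (.nd (.nd .lf 350632275250415403041 .lf) 350632956276143819525 .lf) 355257469197080662020 (.nd (.nd .lf 369377361248100941832 .lf) 369656899973963407616 .lf))) 370233154023314432001
  (.nd (.nd (.nd (.nd .lf 370234179356626913344 .lf) 370241514996418753552 .lf) 370285961925048157188 (.nd (.nd .lf 371384982625852072480 .lf) 371385965577868677892 .lf)) 374843604221888061576
  (.nd (.nd (.nd .lf 374844890614443050048 .lf) 378878972392517025797 .lf) 380036894471426678928 (.nd (.nd .lf 388684311539984891944 .lf) 396750635597777862658 .lf)))) 402227741788248998929
  (.nd (.nd (.nd (.nd (.nd .lf 424432781468015558672 .lf) 429105541023810453506 .lf) 444028051280766175744 (.nd (.nd .lf 447483293014859793408 .lf) 452089354073722067042 .lf)) 455584138854557323856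
  (.nd (.nd (.nd .lf 461673005005369319432 .lf) 470825458572495757328 .lf) 480372065007353726976 (.nd (.nd .lf 480624154444921316384 .lf) 480912805990935068736 .lf))) 498215300373886930944
  (.nd (.nd (.nd (.nd .lf 498782772102128742658 .lf) 517841969991100270849 .lf) 535101945267504021824 (.nd (.nd .lf 560466218364258374656 .lf) 595061744737603747844 .lf)) 595160544581295014985
  (.nd (.nd (.nd .lf 595629480800575031810 .lf) 596205113664839141376 .lf) 597357490858485351168 (.nd .lf 597358250625153105986 .lf))))) 597366549769714139152
  (.nd (.nd (.nd (.nd (.nd (.nd .lf 597376102293867462688 .lf) 599708545785821988354 .lf) 599951545557342790057 (.nd (.nd .lf 600239909007688794632 .lf) 600313095761730502784 .lf)) 600816257185142538241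
  (.nd (.nd (.nd .lf 600825226331135578113 .lf) 600839023148381863937 .lf) 601969360501082300420 (.nd (.nd .lf 603123751119657928704 .lf) 604274984171356635296 .lf))) 609179439889817670032
  (.nd (.nd (.nd (.nd .lf 609193075268260988928 .lf) 609248505722690342912 .lf) 610041878538881091072 (.nd (.nd .lf 610697116743783940272 .lf) 611192521632028559458 .lf)) 611265702828102912000
  (.nd (.nd (.nd .lf 613499503529083014440 .lf) 613499532399849013248 .lf) 614076158620041487424 (.nd (.nd .lf 614655780958169499140 .lf) 618110053236854556678 .lf)))) 618115126624283820176
  (.nd (.nd (.nd (.nd (.nd .lf 619858001280037293568 .lf) 620417010869297250306 .lf) 625104413353633252928 (.nd (.nd .lf 627946193520062107654 .lf) 627982043104101286146 .lf)) 628779104363255906564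
  (.nd (.nd (.nd .lf 630260754690015823892 .lf) 630847417948420980736 .lf) 634250980243762937856 (.nd (.nd .lf 636579919462146261064 .lf) 639439529297492083488 .lf))) 641196126701378097280
  (.nd (.nd (.nd (.nd .lf 651275393742527795208 .lf) 655598051135099764820 .lf) 657311626987300782080 (.nd (.nd .lf 665096105434582433797 .lf) 665458073494978990080 .lf)) 666533308094480400393
  (.nd (.nd (.nd .lf 668838876074365158408 .lf) 673468358937786975782 .lf) 674033701170815435200 (.nd .lf 687285332072286994561 .lf)))))) 687933850375661027462
  (.nd (.nd (.nd (.nd (.nd (.nd (.nd .lf 688476542833604444168 .lf) 689591245346426589568 .lf) 703430895236929355776 (.nd (.nd .lf 728799514950409129986 .lf) 740355749949150946368 .lf)) 742629029987370926096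
  (.nd (.nd (.nd .lf 742637985475787227904 .lf) 742644142088873182209 .lf) 742950687823376941056 (.nd (.nd .lf 744359592123569291456 .lf) 747247736286574886912 .lf))) 775202372161326022656
  (.nd (.nd (.nd (.nd .lf 775483831571724902928 .lf) 776063122329594761536 .lf) 776081688683343823368 (.nd (.nd .lf 823916382953366650896 .lf) 832563574614456288272 .lf)) 839478570409181839872
  (.nd (.nd (.nd .lf 891366112052830797824 .lf) 895392219891497041934 .lf) 899424859656244199428 (.nd (.nd .lf 899999912484077052608 .lf) 908720570220722062848 .lf)))) 908934491830216820768
  (.nd (.nd (.nd (.nd (.nd .lf 910952671196964077584 .lf) 923093852413558276608 .lf) 927095539060143309312 (.nd (.nd .lf 942081054820614603569 .lf) 963988783047512166528 .lf)) 964310769817775790080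
  (.nd (.nd (.nd .lf 966368897800776712256 .lf) 1038061840449488828433 .lf) 1052765952596838547464 (.nd (.nd .lf 1199769498243224862744 .lf) 1201495148758759899789 .lf))) 1218864617742878648328
  (.nd (.nd (.nd (.nd .lf 1219363602490655514633 .lf) 1219936479007387943172 .lf) 1227140828733789710426 (.nd (.nd .lf 1228294029447660671105 .lf) 1229464895271926366276 .lf)) 1256838688895035050240
  (.nd (.nd (.nd .lf 1259138929860759584832 .lf) 1259155086836236292232 .lf) 1266340162329829752993 (.nd .lf 1273546515162811992148 .lf))))) 1293150086209122619424
  (.nd (.nd (.nd (.nd (.nd (.nd .lf 1293726582147435757634 .lf) 1296032671792963519009 .lf) 1330904608578034733058 (.nd (.nd .lf 1334110324815762047348 .lf) 1335803823552914046976 .lf)) 1347117012120097530368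
  (.nd (.nd (.nd .lf 1347621266094823178240 .lf) 1347909499630197407744 .lf) 1412473662027495116065 (.nd (.nd .lf 1481648957794023899144 .lf) 1485687981874020915456 .lf))) 1494618950473440299016
  (.nd (.nd (.nd (.nd .lf 1494908324824867672065 .lf) 1516235893746435115520 .lf) 1553129700820657379456 (.nd (.nd .lf 1565237610766460387328 .lf) 1577917194521738748032 .lf)) 1587726703008925384704
  (.nd (.nd (.nd .lf 1708791800516204560384 .lf) 1790363249863720704516 .lf) 1809078027405956284544 (.nd .lf 1998806023367988086784 .lf)))) 2078861733198880051200
  (.nd (.nd (.nd (.nd (.nd .lf 2080034925231000781152 .lf) 2085802197978559037968 .lf) 2437423061217269781536 (.nd (.nd .lf 2442074646160110288960 .lf) 2454716430624665632840 .lf)) 2482384114890454859908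
  (.nd (.nd (.nd .lf 2527924540633197346848 .lf) 2548118669061369103372 .lf) 2602287959923162874112 (.nd (.nd .lf 2666851557891169058818 .lf) 2680218239037815691336 .lf))) 2698268780693458890816
  (.nd (.nd (.nd (.nd .lf 3009557473962496131156 .lf) 3106186707366295110144 .lf) 3110726335210130513921 (.nd (.nd .lf 3710248104302416494592 .lf) 4178908109771779606528 .lf)) 5058308134232683450372
  (.nd (.nd (.nd .lf 5096348843995626997828 .lf) 5101245347507590189062 .lf) 5104127616083168329828 (.nd .lf 5427026702234518847745 .lf)))))))))

def cA : List ℕ := (HL.take 19).map fun m => Nat.shiftRight m 38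

def cB : List ℕ := (HL.drop 19).map fun m => Nat.shiftRight m 38

def cC : List ℕ := (HR.take 19).map fun m => Nat.mod m 274877906944

def cD : List ℕ := (HR.drop 19).map fun m => Nat.mod m 274877906944

def unit : List ℕ := (List.range' 0 38).map fun i => Nat.pow 2 i

theorem chk_0_0 : chk allT 0 19 38 cA cB 0 = true := by decide +kernel

theorem chk_0_1 : chk allT 0 19 38 cA cB 1 = true := by decide +kernel

theorem chk_0_2 : chk allT 0 19 38 cA cB 2 = true := by decide +kernel

theorem chk_0_3 : chk allT 0 19 38 cA cB 3 = true := by decide +kernel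

theorem chk_0 (a : ℕ) (ha : a ≤ 3) : chk allT 0 19 38 cA cB a = true := by
  interval_cases a
  · exact chk_0_0
  · exact chk_0_1
  · exact chk_0_2
  · exact chk_0_3

theorem chk_1_0 : chk allT 19 0 38 cB cA 0 = true := by decide +kernel

theorem chk_1_1 : chk allT 19 0 38 cB cA 1 = true := by decide +kernel

theorem chk_1_2 : chk allT 19 0 38 cB cA 2 = true := by decide +kernel

theorem chk_1_3 : chk allT 19 0 38 cB cA 3 = true := by decide +kernel

theorem chk_1 (a : ℕ) (ha : a ≤ 3) : chk allT 19 0 38 cB cA a = true := by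
  interval_cases a
  · exact chk_1_0
  · exact chk_1_1
  · exact chk_1_2
  · exact chk_1_3

theorem chk_2_0 : chk allT 38 57 0 cC cD 0 = true := by decide +kernel

theorem chk_2_1 : chk allT 38 57 0 cC cD 1 = true := by decide +kernel

theorem chk_2_2 : chk allT 38 57 0 cC cD 2 = true := by decide +kernel

theorem chk_2_3 : chk allT 38 57 0 cC cD 3 = true := by decide +kernel

theorem chk_2 (a : ℕ) (ha : a ≤ 3) : chk allT 38 57 0 cC cD a = true := by
  interval_cases a
  · exact chk_2_0
  · exact chk_2_1
  · exact chk_2_2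
  · exact chk_2_3

theorem chk_3_0 : chk allT 57 38 0 cD cC 0 = true := by decide +kernel

theorem chk_3_1 : chk allT 57 38 0 cD cC 1 = true := by decide +kernel

theorem chk_3_2 : chk allT 57 38 0 cD cC 2 = true := by decide +kernel

theorem chk_3_3 : chk allT 57 38 0 cD cC 3 = true := by decide +kernel

theorem chk_3 (a : ℕ) (ha : a ≤ 3) : chk allT 57 38 0 cD cC a = true := by
  interval_cases a
  · exact chk_3_0
  · exact chk_3_1
  · exact chk_3_2
  · exact chk_3_3


/-! ### The enumeration theorem -/

noncomputable def allLt (n : ℕ) (l : List ℕ) : Bool := allL (fun x => Nat.blt x (Nat.pow 2 n)) l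

theorem xorSel_lt (n : ℕ) (l : List ℕ) (h : allLt n l = true) (m : ℕ) : xorSel l m < 2 ^ n := by
  have hl : ∀ x ∈ l, x < 2 ^ n := fun x hx => Nat.le_of_ble_eq_true (allL_spec _ _ h x hx)
  clear h
  induction l generalizing m with
  | nil => exact Nat.pow_pos (by norm_num)
  | cons q l ih =>
    have h : xorSel (q :: l) m = cond (bt m 0) (q ^^^ (xorSel l (m >>> 1))) (xorSel l (m >>> 1)) := rfl
    have h2 := ih (m >>> 1) (fun x hx => hl x (List.mem_cons_of_mem _ hx))
    rw [h]
    cases bt m 0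
    · exact h2
    · exact Nat.xor_lt_two_pow (hl q List.mem_cons_self) h2

theorem sel (cols R : List ℕ) (hl : cols.length = 76) (hlt : allLt 38 cols = true)
    (hR : (List.range 38).map (fun j => wordAt j cols) = R) (m : ℕ)
    (hd : ∀ a ∈ R, ∀ b ∈ R, dot (vec a) (vec m) = dot (vec b) (vec m)) :
    xorSel cols m = 0 ∨ xorSel cols m = 274877906943 := by
  have hb : ∀ j < 38, bz ((xorSel cols m).testBit j) = dot (vec (wordAt j cols)) (vec m) := by
    intro j hj
    rw [xorSel_par, hl, dot_vec]
  have hm : ∀ j < 38, wordAt j cols ∈ R := by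
    intro j hj
    rw [← hR]
    exact List.mem_map.mpr ⟨j, List.mem_range.mpr hj, rfl⟩
  have heq : ∀ j < 38, (xorSel cols m).testBit j = (xorSel cols m).testBit 0 := by
    intro j hj
    apply bz_inj
    rw [hb j hj, hb 0 (by norm_num)]
    exact hd _ (hm j hj) _ (hm 0 (by norm_num))
  have hlt' := xorSel_lt 38 cols hlt m
  have hge : ∀ j, 38 ≤ j → (xorSel cols m).testBit j = false := by
    intro j hj
    exact Nat.testBit_lt_two_pow (lt_of_lt_of_le hlt' (Nat.pow_le_pow_right (by norm_num) hj))
  cases h0 : (xorSel cols m).testBit 0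
  · left
    apply Nat.eq_of_testBit_eq
    intro j
    by_cases hj : j < 38
    · rw [heq j hj, h0]; simp
    · rw [hge j (by omega)]; simp
  · right
    apply Nat.eq_of_testBit_eq
    intro j
    rw [show 274877906943 = 2 ^ 38 - 1 by norm_num, Nat.testBit_two_pow_sub_one]
    by_cases hj : j < 38
    · rw [heq j hj, h0]; simp [hj]
    · rw [hge j (by omega)]; simp [hj]

noncomputable def colsL : List ℕ := cA ++ (cB ++ unit)

noncomputable def colsR : List ℕ := unit ++ (cC ++ cD)

theorem colsL_len : colsL.length = 76 := by decide +kernel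

theorem colsR_len : colsR.length = 76 := by decide +kernel

theorem colsL_lt : allLt 38 colsL = true := by decide +kernel

theorem colsR_lt : allLt 38 colsR = true := by decide +kernel

theorem colsL_tr : (List.range 38).map (fun j => wordAt j colsL) = HR := by decide +kernel

theorem colsR_tr : (List.range 38).map (fun j => wordAt j colsR) = HL := by decide +kernel

theorem cA_len : cA.length = 19 := by decide +kernel

theorem cB_len : cB.length = 19 := by decide +kernel

theorem cC_len : cC.length = 19 := by decide +kernel

theorem cD_len : cD.length = 19 := by decide +kernel

theorem unit_len : unit.length = 38 := by decide +kernel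

theorem unit_sel (m : ℕ) : xorSel unit m = m % 2 ^ 38 := by
  have := xorSel_unit 38 0 m
  rw [Nat.shiftLeft_zero] at this
  exact this

theorem selL (m : ℕ) (hm : m < 2 ^ 76) : xorSel colsL m =
    xorSel cA (m % 2 ^ 19) ^^^ (xorSel cB ((m >>> 19) % 2 ^ 19) ^^^ (m >>> 38)) := by
  rw [colsL, xorSel_append, xorSel_append, cA_len, cB_len, unit_sel, ← Nat.shiftRight_add,
    xorSel_mod _ _ _ (by rw [cA_len]), xorSel_mod _ _ _ (by rw [cB_len])]
  rw [Nat.mod_eq_of_lt (a := m >>> (19 + 19))]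
  rw [Nat.shiftRight_eq_div_pow]; omega

theorem selR (m : ℕ) : xorSel colsR m =
    (m % 2 ^ 38) ^^^ (xorSel cC ((m >>> 38) % 2 ^ 19) ^^^ (xorSel cD ((m >>> 57) % 2 ^ 19))) := by
  rw [colsR, xorSel_append, xorSel_append, cC_len, unit_len, unit_sel, ← Nat.shiftRight_add,
    xorSel_mod _ _ _ (by rw [cC_len]), xorSel_mod _ _ _ (by rw [cD_len])]

theorem pc_mod (n x : ℕ) : pc n (x % 2 ^ n) = pc n x := by
  apply Finset.sum_congr rfl
  intro i hi
  rw [Nat.testBit_mod_two_pow]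
  simp [Finset.mem_range.mp hi]

theorem pc_blocks (m : ℕ) : pc 76 m =
    pc 19 m + pc 19 (m >>> 19) + (pc 19 (m >>> 38) + pc 19 (m >>> 57)) := by
  rw [show 76 = 19 + (19 + (19 + 19)) from rfl, pc_add, pc_add, pc_add, ← Nat.shiftRight_add,
    ← Nat.shiftRight_add]
  ring

theorem pc_lo (m : ℕ) : pc 38 (m % 2 ^ 38) = pc 19 m + pc 19 (m >>> 19) := by
  rw [pc_mod, show 38 = 19 + 19 from rfl, pc_add]

theorem pc_hi (m : ℕ) : pc 38 (m >>> 38) = pc 19 (m >>> 38) + pc 19 (m >>> 57) := by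
  rw [show pc 38 = pc (19 + 19) from rfl, pc_add, ← Nat.shiftRight_add]

theorem tb0_mod (m : ℕ) : (m % 2 ^ 19).testBit 0 = m.testBit 0 := by
  rw [Nat.testBit_mod_two_pow]; simp

/-- the conclusion: `m` is zero or a rotation of a word in the list -/
def Concl (m : ℕ) : Prop := m = 0 ∨ ∃ i, rotN^[i] m ∈ allT.toList

theorem cfg (m s : ℕ) (hm : m < 2 ^ 76) (hs : s = 0 ∨ s = 19 ∨ s = 38 ∨ s = 57)
    (hL : xorSel colsL m = 0 ∨ xorSel colsL m = 274877906943)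
    (hR : xorSel colsR m = 0 ∨ xorSel colsR m = 274877906943)
    (hw : pc 76 m ≤ 14)
    (h3 : pc 19 (m >>> s) ≤ 3)
    (h01 : s < 38 → pc 19 m + pc 19 (m >>> 19) ≤ 7)
    (h23 : 38 ≤ s → pc 19 (m >>> 38) + pc 19 (m >>> 57) ≤ 7)
    (h0 : (m >>> s) % 2 ^ 19 = 0 ∨ (m >>> s).testBit 0 = true) : Concl m := by
  rw [selL m hm] at hL
  rw [selR m] at hR
  rw [pc_blocks] at hw
  have l19 : ∀ x, x % 2 ^ 19 < 2 ^ 19 := fun x => Nat.mod_lt _ (by norm_num)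
  have l38 : m % 2 ^ 38 < 2 ^ 38 := Nat.mod_lt _ (by norm_num)
  have r38 : m >>> 38 < 2 ^ 38 := by rw [Nat.shiftRight_eq_div_pow]; omega
  have e57 : m >>> 57 < 2 ^ 19 := by rw [Nat.shiftRight_eq_div_pow]; omega
  rw [← tb0_mod] at h0
  rcases hs with rfl | rfl | rfl | rfl
  · have h := chk_spec allT 0 19 38 cA cB _ h3 (chk_0 _ h3) cB_len (m % 2 ^ 19)
      ((m >>> 19) % 2 ^ 19) (m >>> 38) (l19 _) (l19 _) r38 (by rw [pc_mod]; rfl)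
      h0 (by rw [pc_mod]; exact h01 (by norm_num))
      (by rw [pc_mod, pc_hi]; exact hw) hL
    have e : (m % 2 ^ 19) <<< 0 + (((m >>> 19) % 2 ^ 19) <<< 19 + (m >>> 38) <<< 38) = m := by
      simp only [Nat.shiftLeft_eq, Nat.shiftRight_eq_div_pow]; omega
    rw [e] at h
    exact h
  · have h := chk_spec allT 19 0 38 cB cA _ h3 (chk_1 _ h3) cA_len ((m >>> 19) % 2 ^ 19)
      (m % 2 ^ 19) (m >>> 38) (l19 _) (l19 _) r38 (by rw [pc_mod])
      h0 (by rw [pc_mod]; have := h01 (by norm_num); omega)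
      (by rw [pc_mod, pc_hi]; omega) (by rw [Nat.xor_left_comm]; exact hL)
    have e : ((m >>> 19) % 2 ^ 19) <<< 19 + ((m % 2 ^ 19) <<< 0 + (m >>> 38) <<< 38) = m := by
      simp only [Nat.shiftLeft_eq, Nat.shiftRight_eq_div_pow]; omega
    rw [e] at h
    exact h
  · have h := chk_spec allT 38 57 0 cC cD _ h3 (chk_2 _ h3) cD_len ((m >>> 38) % 2 ^ 19)
      ((m >>> 57) % 2 ^ 19) (m % 2 ^ 38) (l19 _) (l19 _) l38 (by rw [pc_mod])
      h0 (by rw [pc_mod]; exact h23 (by norm_num))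
      (by rw [pc_mod, pc_lo]; omega)
      (by rw [← Nat.xor_assoc, Nat.xor_comm _ (m % 2 ^ 38)]; exact hR)
    have e : ((m >>> 38) % 2 ^ 19) <<< 38 + (((m >>> 57) % 2 ^ 19) <<< 57 + (m % 2 ^ 38) <<< 0) = m := by
      simp only [Nat.shiftLeft_eq, Nat.shiftRight_eq_div_pow]; omega
    rw [e] at h
    exact h
  · have h := chk_spec allT 57 38 0 cD cC _ h3 (chk_3 _ h3) cC_len ((m >>> 57) % 2 ^ 19)
      ((m >>> 38) % 2 ^ 19) (m % 2 ^ 38) (l19 _) (l19 _) l38 (by rw [pc_mod])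
      h0 (by rw [pc_mod]; have := h23 (by norm_num); omega)
      (by rw [pc_mod, pc_lo]; omega)
      (by rw [Nat.xor_left_comm, ← Nat.xor_assoc, Nat.xor_comm _ (m % 2 ^ 38)]; exact hR)
    have e : ((m >>> 57) % 2 ^ 19) <<< 57 + (((m >>> 38) % 2 ^ 19) <<< 38 + (m % 2 ^ 38) <<< 0) = m := by
      simp only [Nat.shiftLeft_eq, Nat.shiftRight_eq_div_pow]; omega
    rw [e] at h
    exact h

theorem testBit_rotN (m i : ℕ) (hi : i < 76) :
    (rotN m).testBit i = m.testBit (if i % 19 = 18 then i - 18 else i + 1) :=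
  bz_inj (congrFun (vec_rotN m) ⟨i, hi⟩)

theorem pc_rotN (m s : ℕ) (hs : s = 0 ∨ s = 19 ∨ s = 38 ∨ s = 57) :
    pc 19 (rotN m >>> s) = pc 19 (m >>> s) := by
  have hs' : s % 19 = 0 ∧ s ≤ 57 := by omega
  have e1 := Finset.sum_range_succ (fun i => ((rotN m >>> s).testBit i).toNat) 18
  have e2 := Finset.sum_range_succ' (fun i => ((m >>> s).testBit i).toNat) 18
  refine e1.trans (Eq.trans (congrArg₂ (· + ·) ?_ ?_) e2.symm)
  · apply Finset.sum_congr rfl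
    intro i hi
    have := Finset.mem_range.mp hi
    rw [testBit_shr, testBit_shr, testBit_rotN _ _ (by omega), if_neg (by omega), add_assoc]
  · rw [testBit_shr, testBit_shr, testBit_rotN _ _ (by omega), if_pos (by omega)]
    rfl

theorem pc_rotN_iter (m s q : ℕ) (hs : s = 0 ∨ s = 19 ∨ s = 38 ∨ s = 57) :
    pc 19 (rotN^[q] m >>> s) = pc 19 (m >>> s) := by
  induction q generalizing m with
  | zero => rfl
  | succ q ih => rw [Function.iterate_succ_apply, ih, pc_rotN _ _ hs]

theorem tb_rotN_iter (m s q : ℕ) (hs : s = 0 ∨ s = 19 ∨ s = 38 ∨ s = 57) (hq : q ≤ 18) :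
    (rotN^[q] m).testBit s = m.testBit (s + q) := by
  induction q generalizing m with
  | zero => rfl
  | succ q ih =>
    rw [Function.iterate_succ_apply, ih _ (by omega), testBit_rotN _ _ (by omega),
      if_neg (by omega), add_assoc]

theorem rotN_iter_lt (m q : ℕ) (hm : m < 2 ^ 76) : rotN^[q] m < 2 ^ 76 := by
  cases q with
  | zero => exact hm
  | succ q => rw [Function.iterate_succ_apply']; exact rotN_lt _

theorem enum (S : Set (Fin 76 → ZMod 2)) (hS : ∀ x ∈ S, ∀ k : ℕ, x ∘ (sig ^ k : Equiv.Perm (Fin 76)) ∈ S)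
    (hR : ∀ x ∈ S, ∀ a ∈ HR, ∀ b ∈ HR, dot (vec a) x = dot (vec b) x)
    (hL : ∀ x ∈ S, ∀ a ∈ HL, ∀ b ∈ HL, dot (vec a) x = dot (vec b) x)
    (x : Fin 76 → ZMod 2) (hx : x ∈ S) (hw : wt x ≤ 14) :
    x = 0 ∨ ∃ i : ℕ, ∃ l ∈ allT.toList, x ∘ (sig ^ i : Equiv.Perm (Fin 76)) = vec l := by
  obtain ⟨m, hm, rfl⟩ := vec_surj x
  rw [wt_vec] at hw
  have hw' := hw
  rw [pc_blocks] at hw'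
  obtain ⟨s, hs, h3, h01, h23⟩ : ∃ s, (s = 0 ∨ s = 19 ∨ s = 38 ∨ s = 57) ∧
      pc 19 (m >>> s) ≤ 3 ∧ (s < 38 → pc 19 m + pc 19 (m >>> 19) ≤ 7) ∧
      (38 ≤ s → pc 19 (m >>> 38) + pc 19 (m >>> 57) ≤ 7) := by
    by_cases h : pc 19 m + pc 19 (m >>> 19) ≤ 7
    · by_cases h' : pc 19 m ≤ 3
      · exact ⟨0, by omega, h', fun _ => h, fun h => by omega⟩
      · exact ⟨19, by omega, by omega, fun _ => h, fun h => by omega⟩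
    · by_cases h' : pc 19 (m >>> 38) ≤ 3
      · exact ⟨38, by omega, h', fun h => by omega, fun _ => by omega⟩
      · exact ⟨57, by omega, by omega, fun h => by omega, fun _ => by omega⟩
  obtain ⟨q, hq⟩ : ∃ q : ℕ, (rotN^[q] m >>> s) % 2 ^ 19 = 0 ∨ (rotN^[q] m >>> s).testBit 0 = true := by
    by_cases h : (m >>> s) % 2 ^ 19 = 0
    · exact ⟨0, Or.inl h⟩
    · obtain ⟨q, hq⟩ := Nat.exists_testBit_of_ne_zero h
      rw [Nat.testBit_mod_two_pow, Bool.and_eq_true, decide_eq_true_eq, testBit_shr] at hq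
      exact ⟨q, Or.inr (by rw [testBit_shr, add_zero, tb_rotN_iter _ _ _ hs (by omega)]; exact hq.2)⟩
  have hmem : vec (rotN^[q] m) ∈ S := by
    rw [vec_rotN_iter]; exact hS _ hx q
  have p0 := pc_rotN_iter m 0 q (by omega)
  have p1 := pc_rotN_iter m 19 q (by omega)
  have p2 := pc_rotN_iter m 38 q (by omega)
  have p3 := pc_rotN_iter m 57 q (by omega)
  rw [Nat.shiftRight_zero, Nat.shiftRight_zero] at p0
  have hc := cfg (rotN^[q] m) s (rotN_iter_lt m q hm) hs
    (sel colsL HR colsL_len colsL_lt colsL_tr _ (hR _ hmem))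
    (sel colsR HL colsR_len colsR_lt colsR_tr _ (hL _ hmem))
    (by rw [pc_blocks, p0, p1, p2, p3]; exact hw')
    (by rw [pc_rotN_iter _ _ _ hs]; exact h3)
    (by rw [p0, p1]; exact h01) (by rw [p2, p3]; exact h23) hq
  rcases hc with hc | ⟨i, hi⟩
  · left
    have h1 : vec m ∘ (sig ^ q : Equiv.Perm (Fin 76)) = 0 := by
      rw [← vec_rotN_iter, hc, vec_zero]
    funext j
    have := congrFun h1 ((sig ^ q : Equiv.Perm (Fin 76)).symm j)
    simpa using this
  · right
    refine ⟨i + q, _, hi, ?_⟩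
    rw [← Function.iterate_add_apply, vec_rotN_iter]

/-! ### Counting the words of weight 14 through two coordinates -/

def cval : List ℕ → ℕ → ℕ
  | [], _ => 0
  | c :: cs, j => Nat.add (Nat.land (Nat.shiftRight c j) 1) (Nat.mul 2 (cval cs j))

def cplus : List ℕ → ℕ → List ℕ
  | [], m => bif Nat.beq m 0 then [] else [m]
  | c :: cs, m => Nat.xor c m :: cplus cs (Nat.land c m)

noncomputable def cadd : List ℕ → ℕ → (List ℕ → Bool) → Bool
  | [], m, k => bif Nat.beq m 0 then k [] else k [m]
  | c :: cs, m, k => frc (Nat.xor c m) fun a => frc (Nat.land c m) fun b =>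
      cadd cs b fun r => k (a :: r)

theorem cadd_eq (cs : List ℕ) (m : ℕ) (k : List ℕ → Bool) : cadd cs m k = k (cplus cs m) := by
  induction cs generalizing m k with
  | nil => rw [cadd, cplus]; cases Nat.beq m 0 <;> rfl
  | cons c cs ih => rw [cadd, frc_eq, frc_eq, ih, cplus]

theorem land_bit (c j : ℕ) : Nat.land (Nat.shiftRight c j) 1 = (c.testBit j).toNat := by
  have h : Nat.land (Nat.shiftRight c j) 1 = (c >>> j) % 2 := Nat.and_one_is_mod _
  rw [h, Nat.testBit_eq_decide_div_mod_eq, Nat.shiftRight_eq_div_pow]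
  have := Nat.mod_lt (c / 2 ^ j) (show 2 > 0 by norm_num)
  generalize c / 2 ^ j % 2 = r at *
  interval_cases r <;> rfl

theorem cval_cplus (cs : List ℕ) (m j : ℕ) :
    cval (cplus cs m) j = cval cs j + (m.testBit j).toNat := by
  induction cs generalizing m with
  | nil =>
    rw [cplus]
    cases h : Nat.beq m 0
    · show Nat.add (Nat.land (Nat.shiftRight m j) 1) (Nat.mul 2 0) = 0 + (m.testBit j).toNat
      rw [land_bit, zero_add]; rfl
    · rw [Nat.eq_of_beq_eq_true h]; simp [cval]
  | cons c cs ih =>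
    have e1 : ∀ d ds, cval (d :: ds) j = (d.testBit j).toNat + 2 * cval ds j := by
      intro d ds
      rw [← land_bit]; rfl
    rw [cplus, e1, e1, ih]
    have e2 : (Nat.xor c m).testBit j = (c.testBit j ^^ m.testBit j) := Nat.testBit_xor c m j
    have e3 : (Nat.land c m).testBit j = (c.testBit j && m.testBit j) := Nat.testBit_and c m j
    rw [e2, e3]
    cases c.testBit j <;> cases m.testBit j <;> simp <;> omega

/-- feed the `n` first rotations of `m` -/
noncomputable def proc (i : ℕ) : ℕ → ℕ → List ℕ → (List ℕ → Bool) → Bool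
  | 0, _, st, k => k st
  | n + 1, m, st, k => frc (rotN m) fun m1 =>
      bif bt m i then cadd st m fun st1 => proc i n m1 st1 k else proc i n m1 st k

def rots (n m : ℕ) : List ℕ := (List.range n).map fun q => rotN^[q] m

theorem rots_succ (n m : ℕ) : rots (n + 1) m = m :: rots n (rotN m) := by
  rw [rots, List.range_succ_eq_map, List.map_cons, List.map_map]
  rfl

def both (i j m : ℕ) : Bool := m.testBit i && m.testBit j

theorem proc_eq (i n m : ℕ) (st : List ℕ) (k : List ℕ → Bool) :
    ∃ st1, proc i n m st k = k st1 ∧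
      ∀ j, cval st1 j = cval st j + (rots n m).countP (both i j) := by
  induction n generalizing m st with
  | zero => exact ⟨st, rfl, fun j => rfl⟩
  | succ n ih =>
    rw [proc, frc_eq, rots_succ, bt_eq]
    cases h : m.testBit i
    · obtain ⟨st1, h1, h2⟩ := ih (rotN m) st
      refine ⟨st1, h1, fun j => ?_⟩
      rw [h2 j, List.countP_cons]
      simp [both, h]
    · obtain ⟨st1, h1, h2⟩ := ih (rotN m) (cplus st m)
      refine ⟨st1, ?_, fun j => ?_⟩
      · rw [cond_true, cadd_eq]; exact h1
      · rw [h2 j, List.countP_cons, cval_cplus]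
        have : both i j m = m.testBit j := by simp [both, h]
        rw [this]
        cases m.testBit j <;> simp <;> omega

noncomputable def procL (chi i : ℕ) : List ℕ → List ℕ → (List ℕ → Bool) → Bool
  | [], st, k => k st
  | l :: ls, st, k => bif par (Nat.land chi l) then procL chi i ls st k
      else proc i 19 l st fun st1 => procL chi i ls st1 k

def words (chi : ℕ) (ls : List ℕ) : List ℕ :=
  (ls.filter fun l => !(par (Nat.land chi l))).flatMap (rots 19)

theorem procL_eq (chi i : ℕ) (ls st : List ℕ) (k : List ℕ → Bool) :
    ∃ st1, procL chi i ls st k = k st1 ∧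
      ∀ j, cval st1 j = cval st j + (words chi ls).countP (both i j) := by
  induction ls generalizing st with
  | nil => exact ⟨st, rfl, fun j => rfl⟩
  | cons l ls ih =>
    rw [procL, words]
    cases h : par (Nat.land chi l)
    · obtain ⟨st1, h1, h2⟩ := proc_eq i 19 l st fun st1 => procL chi i ls st1 k
      obtain ⟨st2, h3, h4⟩ := ih st1
      refine ⟨st2, ?_, fun j => ?_⟩
      · rw [cond_false, h1, h3]
      · rw [List.filter_cons_of_pos (by rw [h]; rfl), List.flatMap_cons, List.countP_append, h4, h2]
        rw [add_assoc]; rfl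
    · obtain ⟨st2, h3, h4⟩ := ih st
      refine ⟨st2, by rw [cond_true, h3], fun j => ?_⟩
      rw [List.filter_cons_of_neg (by rw [h]; simp), h4]; rfl

noncomputable def ubChk (chi u i : ℕ) : Bool :=
  procL chi i allT.toList [] fun st =>
    (List.range 76).all fun j => Nat.beq i j || Nat.ble (cval st j) u

theorem ubChk_spec {chi u i : ℕ} (h : ubChk chi u i = true) (j : ℕ) (hj : j < 76) (hij : i ≠ j) :
    (words chi allT.toList).countP (both i j) ≤ u := by
  obtain ⟨st, h1, h2⟩ := procL_eq chi i allT.toList [] fun st =>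
    (List.range 76).all fun j => Nat.beq i j || Nat.ble (cval st j) u
  rw [ubChk, h1, List.all_eq_true] at h
  have h3 := h j (List.mem_range.mpr hj)
  rw [Bool.or_eq_true] at h3
  rcases h3 with h3 | h3
  · exact absurd (Nat.eq_of_beq_eq_true h3) hij
  · have := Nat.le_of_ble_eq_true h3
    rw [h2 j] at this
    have h0 : cval [] j = 0 := rfl
    omega

/-! ### The three codes -/

/-- basis of the common doubly even subcode -/
def B0 : List ℕ := (HR.drop 1).map fun h => Nat.xor HR0 h

def B1 : List ℕ := (HL.drop 1).map fun h => Nat.xor HL0 h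

def Hc (chi : ℕ) : List ℕ := chi :: B0

def Gc (chi t : ℕ) : List ℕ :=
  t :: (List.range' 39 37).map fun j => bif bt chi j then Nat.xor t (Nat.pow 2 j) else Nat.pow 2 j

def pcK (x : ℕ) : ℕ → ℕ
  | 0 => 0
  | n + 1 => Nat.add (pcK x n) (Nat.land (Nat.shiftRight x n) 1)

theorem pcK_eq (x n : ℕ) : pcK x n = pc n x := by
  induction n with
  | zero => rfl
  | succ n ih =>
    rw [pcK, land_bit, ih, pc, pc, Finset.sum_range_succ]; rfl

theorem allT_wt : (allT.toList.all fun l => Nat.beq (pcK l 76) 14) = true := by decide +kernel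

theorem B0_wt : (B0.all fun l => Nat.beq (Nat.mod (pcK l 76) 4) 0) = true := by decide +kernel

theorem B1_wt : (B1.all fun l => Nat.beq (Nat.mod (pcK l 76) 4) 0) = true := by decide +kernel

theorem B1_lt : ltL B1 = true := by decide +kernel

theorem allT_lt : ltL allT.toList = true := by decide +kernel

/-- the checks for one of the codes -/
structure Dat (chi t w : ℕ) : Prop where
  good : Good (Hc chi) (Gc chi t)
  rot : orthL (Hc chi) ((Hc chi).map rotN) = true
  bl : orthL (Hc chi) B1 = true
  cw : Nat.mod (pcK chi 76) 4 = 2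
  ct : par (Nat.land chi t) = true
  bt0 : orthL B0 [t] = true
  tm : memT allT t = true
  wm : memT allT w = true
  wo : orthL (Hc chi) [w] = true

theorem dat1 : Dat 274877906943 916374227043588 607207760134149 := by
  refine ⟨⟨?_, ?_, ?_, ?_⟩, ?_, ?_, ?_, ?_, ?_, ?_, ?_, ?_⟩ <;> decide +kernel

theorem dat2 : Dat 144114913198473215 64055154871592 916374227043588 := by
  refine ⟨⟨?_, ?_, ?_, ?_⟩, ?_, ?_, ?_, ?_, ?_, ?_, ?_, ?_⟩ <;> decide +kernel

theorem dat3 : Dat 75557719610726248087551 607207760134149 64055154871592 := by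
  refine ⟨⟨?_, ?_, ?_, ?_⟩, ?_, ?_, ?_, ?_, ?_, ?_, ?_, ?_⟩ <;> decide +kernel

theorem ub_1_0 : ubChk 274877906943 183 0 = true := by decide +kernel

theorem ub_1_19 : ubChk 274877906943 183 19 = true := by decide +kernel

theorem ub_1_38 : ubChk 274877906943 183 38 = true := by decide +kernel

theorem ub_1_57 : ubChk 274877906943 183 57 = true := by decide +kernel

theorem ub_2_0 : ubChk 144114913198473215 179 0 = true := by decide +kernel

theorem ub_2_19 : ubChk 144114913198473215 179 19 = true := by decide +kernel

theorem ub_2_38 : ubChk 144114913198473215 179 38 = true := by decide +kernel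

theorem ub_2_57 : ubChk 144114913198473215 179 57 = true := by decide +kernel

/-- words of weight 14 of the third code through the coordinates 19 and 26 -/
def W3 : List ℕ := [
  10363189236072454, 152277963561771076, 291292037213921536, 585652670250403880,
  1342231293844824584, 2017755795294783488, 2305845689378693284, 2315844871558529280,
  2324142259702398982, 2738207299600253249, 2883746329598363906, 3611958120904396800,
  4035511315712184320, 4611691103880003912, 4630283166891520036, 5476379655747938828,
  5872697008684806144, 6926958439462216262, 9296568763932213272, 9697379745993859840,
  10088099449538216644, 10674094161646863104, 12683693465688080512, 19641394793848279040,
  23401275411038470158, 27670195979847996576, 36984125357732413980, 36997141866022993938,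
  47053925566185473043, 73786982894404306433, 73793736763482243076, 73940680677148723200,
  74075207231156654145, 75525577170835998849, 93746951850874634500, 110988187098589839376,
  148727014957739671624, 149956497530137749520, 152347770462768010320, 161991241773955416580,
  162859240231759775776, 166021871492702015490, 166103197470475943936, 171983534040496472576,
  258255226307757998112, 258272712935607107584, 298183340399241203202, 299795655866433837089,
  304948301247130632864, 313738782309352023105, 378171777512993587266, 442723133203671501312,
  590371422124718686344, 590890285522774294534, 590950032974132282384, 595061744737603747844,
  682601624330383671810, 737870176373696888835, 886164381638995808262, 922916232923854667908,
  1180879851442238201856, 1181170333306117166112, 1181210936310132919304, 1181787471571298582528,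
  1181826732950047818305, 1182897624462085653761, 1185205313345164169248, 1185365436597369848395,
  1254563684952654218240, 1475739817473573978632, 1481648957794023899144, 1623368647870244208640,
  1776112204848187320320, 2365795068334723065088, 2365830995833292076054, 2368389020907060346881,
  2370415622388999523840, 2370483223113849373728, 2379632237399693067392, 2380246978675537084433,
  2482384114890454859908, 2547956877643949279488, 2564104190441233859840, 2656354124484201414656,
  2657520686305641234696, 2734819885353553100802, 3110726335210130513921, 3255851458208246290433,
  4132075176868436246536, 4242793922249236160517, 4722385662344136491009, 4722744864678160859392,
  4723231174003285045379, 4731590136394568747520, 4741975156763979715140, 4778932397882833633412,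
  4944880425619958546481, 5017518047224031610156, 5026883670261088391176, 5313238903548671525891,
  5389044609547900552192, 5686244889793487544320, 5905354018588890522888, 5921479157055760306256,
  5949094174448226467968, 7526276156591706734736, 8271653349200535228560, 9444733810208848674992,
  9444746619546164027904, 9449362666174057849092, 9449777177654807035920, 9455109839857453208066,
  9536966686200918966340, 9592919700348449882225, 10039642715153389757442, 10108888975474634039300,
  10191827510300919735296, 10629954291271914358785, 11805916218583762348050, 11808222050277905670720,
  11819787329837952663816, 11898514719112545708576, 12101064323597206062273, 14167676015052401938480,
  14757398707592510308384, 15430990211156015595552, 18889467110568103526784, 18889547141409624704096,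
  18894660904704767754274, 18908023085213103423497, 19018665268713580142596, 19037196665630629658625,
  19332187826699801362960, 19409145335981281903616, 19488987691266936997120, 19563060478909409132672,
  20072543820983441162242, 20075822177354263330892, 20090233749462393045505, 20734158354633273704960,
  22006974841075169558528, 22763287253507260416258, 23611834666337639677969, 23768701796708718002432,
  24829605753593705038248, 24885810681406166728712, 28334415094227997818882, 28408285644363025367552,
  28482937593269833963652, 28631653771461039817024, 33148837381091619381376, 37779472296390520504320,
  37781868315469541024768, 37788732399442420565570, 37815825353327328625044, 37816113581619608691712,
  37816437841238661268224, 37818135700084311725248, 37825337103620327866881, 37963688255350105485440,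
  38130647310438187433984, 38228859761605162307936, 38415354174018165441064, 38977975382258996611584,
  39033382552760786440192, 40145460877166937378882, 40150536715404780783752, 40158706546498081394689,
  40435263015075405637644, 40619731022125413761072, 40730430092432604955392, 42505911228114494300185,
  42505950564280615600224, 42593856369641120333824, 42722677579415328260134, 43110906717427240288257,
  43130302877591677698048, 43681890041313897218182, 47232888200836745300224, 47838174242488558555200,
  56671933128940462803585, 56760634048494149599234, 56964411534237053288608, 61400637293597165099024]

/-- words of weight 14 of the first code through the coordinates 38 and 45 -/
def W1 : List ℕ := [
  607207760134149, 1302148772004630, 22553532561459968, 289674344425308352,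
  360402594289423540, 1153388006919417984, 1369147339012972548, 2305879018959874193,
  2594179764827996168, 4611862251673389708, 4620829969995538440, 4620871634960599044,
  6919816836520881152, 9233048152570200142, 9259718872540381442, 36894860617640624197,
  36934196775171940412, 41509725354453901312, 41509999785218945024, 46711370794338379922,
  64566036652649611468, 73787013970302395402, 73789830971293204546, 73806156506922877088,
  74939933277631545872, 78434735522595210760, 84163327973035868432, 96849945446020622912,
  112073523959311631360, 148223632334909489153, 152249005937453441064, 156871040558982318080,
  159146062058381934720, 166313479292554691120, 167227705619434834016, 186818425574939428354,
  223777145562102498053, 276849815355851800612, 295742719254679060480, 298030809033702981888,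
  299760330484461637648, 301489008982785785863, 313594826627428128800, 318278727431702446596,
  369548888624638984226, 442724162624137920513, 590298104221432823940, 590305136867304539398,
  591737279178944349184, 592458699678612078592, 593637587114537320704, 601834140768555503617,
  609913529196400347152, 613499532399849013248, 636413339950206944264, 668766707564540862849,
  673306477359830007936, 895867617108503306240, 963988783047512166528, 1181177264986103235080,
  1181943861964779488132, 1189819532382360847491, 1217846012836947183872, 1298200064358139035658,
  1328167095329817362432, 1328421328795564278784, 1476613260787530758144, 1909243676617787572288,
  2361345573780371558408, 2362714782263830381314, 2365797639124234010625, 2380463188067345761280,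
  2435547910760695894529, 2564097483720884224518, 2730192538133008089410, 2953784932497525195328,
  2970076420441714458632, 3246626993218111143939, 3541792982387596497960, 3553900909977482035200,
  3615561944309962902917, 3615570881244005696000, 3692231294741035157504, 4136682413806971912192,
  4722385236464243442688, 4722398043595007337164, 4723159855688209929222, 4724384135978491586688,
  4727559256808628438016, 4740815516608686489672, 4779292017757639418881, 4805376875460089151616,
  4806568068899469525001, 4872390434064067338248, 5165232776611450847744, 5183688255924902821956,
  5313546874865749852168, 5607882291465288846850, 5902994740697544818697, 5908295054172682223648,
  5986004518374175968352, 6790780388575050465537, 7084703264112591900672, 9444738072214900854880,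
  9444841105181947346960, 9444868672174361165856, 9449432656949188493313, 9458579319378206785600,
  9519110019550881579145, 9592342983685287447174, 9629202135184671047696, 9739908772400789985408,
  10090495149103699198016, 10938919420703807111172, 11806132433694929453314, 11807071415957110916820,
  11824363708031260754176, 11879721236629542699568, 14169549864478079209984, 14318717673521288151040,
  14333161299170063155200, 14360799330451169738752, 14462247602574275379209, 15052871964578367407360,
  17709311196483793461248, 18889538095450696220705, 18889538589681386681856, 18889775591646671407200,
  18889804862827244552256, 18890187668915557239380, 18890330675661712163843, 18891195489932297649409,
  18892924735850776043527, 18894077727727427944642, 18905823040786596765760, 18908223486323867123720,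
  18926648116616089313288, 18963257464562736169124, 18963290749940036276224, 19009658104248015003664,
  19039357039128017650048, 19064737057248754271244, 19075555829440753700912, 19186922108282175230214,
  19221795593389584941138, 19479905893652910722144, 20070125722191859548180, 20153067936030036869140,
  20661076296810080240641, 21287615880564932870280, 21887099034714486472960, 21988519114330565935108,
  23611834847876981325860, 23612120752201783575044, 23614215417104726755344, 23819362833041018853377,
  28500507930163316654592, 29516520780630692464640, 37779003961509115109684, 37788158648153139064969,
  37793776897484459868160, 37806768938130555797536, 37827505489789652631616, 37834344337904746103317,
  37843496347168051036242, 37933424083734592754180, 38074424470907337589760, 38075989329908774994448,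
  38664557026777126535168, 38971052752895748997120, 40149338512998413928480, 40737400536908928443392,
  43829466208601712364034, 47224837225584234856705, 47297501951818257666304, 47371385184834931985408,
  47419229458049712275456, 48109470011362201829888, 48406706460809693762560, 50029948145437815935232]

def incr : List ℕ → Bool
  | [] => true
  | a :: l => (l.all fun b => Nat.blt a b) && incr l

theorem incr_nodup (l : List ℕ) (h : incr l = true) : l.Nodup := by
  induction l with
  | nil => exact List.nodup_nil
  | cons a l ih =>
    rw [incr, Bool.and_eq_true, List.all_eq_true] at h
    rw [List.nodup_cons]
    refine ⟨fun ha => ?_, ih h.2⟩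
    exact absurd (Nat.le_of_ble_eq_true (h.1 a ha)) (Nat.not_succ_le_self a)

structure LB (chi i j u : ℕ) (W : List ℕ) : Prop where
  len : W.length = u
  inc : incr W = true
  lt : ltL W = true
  wt : (W.all fun l => Nat.beq (pcK l 76) 14 && (bt l i && bt l j)) = true
  orth : orthL (Hc chi) W = true

theorem lb3 : LB 75557719610726248087551 19 26 184 W3 := by
  constructor <;> decide +kernel

theorem lb1 : LB 274877906943 38 45 180 W1 := by
  constructor <;> decide +kernel

/-! ### Assembling -/

abbrev Cd (chi : ℕ) : Submodule (ZMod 2) (Fin 76 → ZMod 2) := code (Hc chi)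

theorem allT_spec {l : ℕ} (hl : l ∈ allT.toList) : l < 2 ^ 76 ∧ wt (vec l) = 14 := by
  refine ⟨ltL_spec allT_lt l hl, ?_⟩
  rw [wt_vec, ← pcK_eq]
  exact Nat.eq_of_beq_eq_true (List.all_eq_true.mp allT_wt l hl)

theorem B0_four {b : ℕ} (hb : b ∈ B0) : 4 ∣ wt (vec b) := by
  rw [wt_vec, ← pcK_eq]
  exact Nat.dvd_of_mod_eq_zero (Nat.eq_of_beq_eq_true (List.all_eq_true.mp B0_wt b hb))

theorem B1_four {b : ℕ} (hb : b ∈ B1) : 4 ∣ wt (vec b) := by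
  rw [wt_vec, ← pcK_eq]
  exact Nat.dvd_of_mod_eq_zero (Nat.eq_of_beq_eq_true (List.all_eq_true.mp B1_wt b hb))

theorem dot_const {A : List ℕ} {a0 : ℕ} {x : Fin 76 → ZMod 2} (hA : A = a0 :: A.drop 1)
    (h : ∀ b ∈ (A.drop 1).map (fun h => Nat.xor a0 h), dot (vec b) x = 0) :
    ∀ a ∈ A, ∀ b ∈ A, dot (vec a) x = dot (vec b) x := by
  have key : ∀ a ∈ A, dot (vec a0) x = dot (vec a) x := by
    intro a ha
    rw [hA, List.mem_cons] at ha
    rcases ha with rfl | ha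
    · rfl
    · have h1 := h _ (List.mem_map_of_mem ha)
      have h2 : vec (Nat.xor a0 a) = vec a0 + vec a := vec_xor a0 a
      rw [h2, dot_comm, dot_add, dot_comm x, dot_comm x] at h1
      have : ∀ p q : ZMod 2, p + q = 0 → p = q := by decide
      exact this _ _ h1
  intro a ha b hb
  rw [← key a ha, ← key b hb]

theorem HR_cons : HR = HR0 :: HR.drop 1 := by decide +kernel

theorem HL_cons : HL = HL0 :: HL.drop 1 := by decide +kernel

section

variable {chi t w : ℕ}

theorem Dat.inv (d : Dat chi t w) : PInv (Cd chi) sig := code_inv d.good d.rot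

theorem Dat.enum (d : Dat chi t w) {x : Fin 76 → ZMod 2} (hx : x ∈ dualSet (evenSub (Cd chi)))
    (hw : wt x ≤ 14) :
    x = 0 ∨ ∃ i : ℕ, ∃ l ∈ allT.toList, x ∘ (sig ^ i : Equiv.Perm (Fin 76)) = vec l := by
  refine _root_.enum (dualSet (evenSub (Cd chi))) ?_ ?_ ?_ x hx hw
  · intro y hy k
    exact dual_comp (d.inv.pow k) hy
  · intro y hy
    apply dot_const HR_cons
    intro b hb
    rw [dot_comm]
    exact hy _ ⟨mem_code_self d.good b (List.mem_cons_of_mem _ hb), B0_four hb⟩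
  · intro y hy
    apply dot_const HL_cons
    intro b hb
    rw [dot_comm]
    exact hy _ ⟨fun h hh => orthL_spec d.good.lt d.bl h hh b hb, B1_four hb⟩

theorem Dat.wt14 (d : Dat chi t w) {x : Fin 76 → ZMod 2} (hx : x ∈ dualSet (evenSub (Cd chi)))
    (h0 : x ≠ 0) : 14 ≤ wt x := by
  by_contra hlt
  rcases d.enum hx (by omega) with h | ⟨i, l, hl, h⟩
  · exact h0 h
  · have h1 := (allT_spec hl).2
    rw [← h, wt_comp] at h1
    omega

theorem minWt_eq (S : Set (Fin 76 → ZMod 2)) (h : ∀ x ∈ S, x ≠ 0 → 14 ≤ wt x)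
    (y : Fin 76 → ZMod 2) (hy : y ∈ S) (hw : wt y = 14) : minWtSet S = 14 := by
  have hy0 : y ≠ 0 := by
    rintro rfl
    simp [wt] at hw
  apply le_antisymm
  · exact Nat.sInf_le ⟨y, hy, hy0, hw⟩
  · refine le_csInf (s := {v | ∃ x ∈ S, x ≠ 0 ∧ wt x = v}) ⟨14, y, hy, hy0, hw⟩ ?_
    rintro _ ⟨x, hx, hx0, rfl⟩
    exact h x hx hx0

theorem Dat.main (d : Dat chi t w) : IsSinglyEvenSelfDual (Cd chi) ∧
    Module.finrank (ZMod 2) (Cd chi) = 38 ∧ minWt (Cd chi) = 14 ∧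
    minWtSet (shadow (Cd chi)) = 14 ∧
    ∃ σ : Equiv.Perm (Fin 76), orderOf σ = 19 ∧
      Submodule.map (LinearMap.funLeft (ZMod 2) (ZMod 2) σ) (Cd chi) = Cd chi := by
  have hcm : chi ∈ Hc chi := List.mem_cons_self
  have hc : wt (vec chi) % 4 = 2 := by
    rw [wt_vec, ← pcK_eq]; exact d.cw
  refine ⟨⟨code_selfDual d.good, vec chi, mem_code_self d.good _ hcm, by omega⟩,
    finrank_code d.good, ?_, ?_, sig, sig_order, d.inv⟩
  · refine minWt_eq (Cd chi : Set (Fin 76 → ZMod 2)) (fun x hx h0 => d.wt14 (code_sub_dual d.good hx) h0) (vec w) ?_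
      (allT_spec (memT_spec _ _ d.wm)).2
    intro h hh
    exact orthL_spec d.good.lt d.wo h hh w (List.mem_singleton_self w)
  · have hct : dot (vec chi) (vec t) = 1 := by
      rw [dot_vec_par _ _ (ltL_spec d.good.lt _ hcm), d.ct]; rfl
    refine minWt_eq (shadow (Cd chi)) (fun x hx h0 => d.wt14 hx.1 h0) (vec t) ⟨?_, ?_⟩
      (allT_spec (memT_spec _ _ d.tm)).2
    · apply evenSub_orth d.good
      intro h hh
      rcases List.mem_cons.mp hh with rfl | hb
      · rw [dot_comm, hct]
        have : (1 : ZMod 2).val = 1 := rfl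
        omega
      · have hl : ltL B0 = true := by
          have := d.good.lt
          rw [Hc, ltL, List.all_cons, Bool.and_eq_true] at this
          exact this.2
        rw [dot_comm, orthL_spec hl d.bt0 h hb t (List.mem_singleton_self t), ZMod.val_zero]
        exact B0_four hb
    · intro hm
      have := hm chi hcm
      rw [hct] at this
      exact absurd this (by decide)

end

/-! ### Inequivalence -/

def NS (C : Submodule (ZMod 2) (Fin 76 → ZMod 2)) (i j : Fin 76) : Set (Fin 76 → ZMod 2) :=
  {x | x ∈ C ∧ wt x = 14 ∧ x i = 1 ∧ x j = 1}

theorem NS_map {C D : Submodule (ZMod 2) (Fin 76 → ZMod 2)} {σ : Equiv.Perm (Fin 76)}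
    (h : Submodule.map (LinearMap.funLeft (ZMod 2) (ZMod 2) σ) C = D) (i j : Fin 76) :
    (NS D i j).ncard = (NS C (σ i) (σ j)).ncard := by
  have e : NS D i j = (fun x : Fin 76 → ZMod 2 => x ∘ σ) '' NS C (σ i) (σ j) := by
    ext y
    constructor
    · rintro ⟨h1, h2, h3, h4⟩
      have ey : (y ∘ σ.symm) ∘ σ = y := by funext i; simp
      refine ⟨y ∘ σ.symm, ⟨?_, ?_, ?_, ?_⟩, ey⟩
      · rw [← mem_map_iff C D σ h, ey]; exact h1
      · rw [wt_comp]; exact h2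
      · simpa using h3
      · simpa using h4
    · rintro ⟨x, ⟨h1, h2, h3, h4⟩, rfl⟩
      exact ⟨(mem_map_iff C D σ h x).mpr h1, (wt_comp x σ).trans h2, h3, h4⟩
  rw [e, Set.ncard_image_of_injective]
  intro a b hab
  funext k
  have := congrFun hab (σ.symm k)
  simpa using this

theorem vec_eq_one {m : ℕ} {i : Fin 76} : vec m i = 1 ↔ m.testBit i = true := by
  rw [vec_apply]
  cases m.testBit i <;> decide

theorem Dat.cover {chi t w : ℕ} (d : Dat chi t w) {x : Fin 76 → ZMod 2} (hx : x ∈ Cd chi)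
    (hw : wt x = 14) : ∃ m ∈ words chi allT.toList, vec m = x := by
  rcases d.enum (code_sub_dual d.good hx) hw.le with h | ⟨i, l, hl, h⟩
  · rw [h] at hw; simp [wt] at hw
  · have hlc : vec l ∈ Cd chi := by
      rw [← h]
      exact (mem_map_iff _ _ _ (d.inv.pow i) x).mpr hx
    have hcm : chi ∈ Hc chi := List.mem_cons_self
    have hp : par (Nat.land chi l) = false := by
      have := hlc chi hcm
      rw [dot_vec_par _ _ (ltL_spec d.good.lt _ hcm)] at this
      exact bz_inj this
    obtain ⟨r, hr, hs⟩ : ∃ r < 19, sig ^ i * sig ^ r = 1 := by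
      refine ⟨(19 - i % 19) % 19, Nat.mod_lt _ (by norm_num), ?_⟩
      rw [← pow_add]
      have h19 : 19 ∣ i + (19 - i % 19) % 19 := by omega
      obtain ⟨c, hc⟩ := h19
      rw [hc, pow_mul, sig_pow, one_pow]
    refine ⟨rotN^[r] l, ?_, ?_⟩
    · rw [words, List.mem_flatMap]
      refine ⟨l, List.mem_filter.mpr ⟨hl, by rw [hp]; rfl⟩, ?_⟩
      exact List.mem_map.mpr ⟨r, List.mem_range.mpr hr, rfl⟩
    · rw [vec_rotN_iter, ← h, Function.comp_assoc, ← Equiv.Perm.coe_mul, hs]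
      rfl

theorem Dat.ub {chi t w u : ℕ} (d : Dat chi t w)
    (h0 : ubChk chi u 0 = true) (h1 : ubChk chi u 19 = true)
    (h2 : ubChk chi u 38 = true) (h3 : ubChk chi u 57 = true) (i j : Fin 76) (hij : i ≠ j) :
    (NS (Cd chi) i j).ncard ≤ u := by
  have hs : ∀ i : Fin 76, ∃ s : Fin 19, ((sig ^ s.val) i).val = 0 ∨ ((sig ^ s.val) i).val = 19 ∨
      ((sig ^ s.val) i).val = 38 ∨ ((sig ^ s.val) i).val = 57 := by
    decide +kernel
  obtain ⟨s, hs⟩ := hs i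
  rw [NS_map (d.inv.pow s.val)]
  have hne : (sig ^ s.val) i ≠ (sig ^ s.val) j := fun h => hij ((sig ^ s.val).injective h)
  generalize (sig ^ s.val) i = i' at *
  generalize (sig ^ s.val) j = j' at *
  have hne' : i'.val ≠ j'.val := fun h => hne (Fin.ext h)
  have hc : (words chi allT.toList).countP (both i' j') ≤ u := by
    rcases hs with h | h | h | h <;> rw [h] at hne' ⊢
    · exact ubChk_spec h0 _ j'.2 hne'
    · exact ubChk_spec h1 _ j'.2 hne'
    · exact ubChk_spec h2 _ j'.2 hne'
    · exact ubChk_spec h3 _ j'.2 hne'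
  refine le_trans ?_ hc
  classical
  rw [List.countP_eq_length_filter]
  have hsub : NS (Cd chi) i' j' ⊆
      (((words chi allT.toList).filter (both i' j')).toFinset.image vec : Finset _) := by
    rintro x ⟨hx1, hx2, hx3, hx4⟩
    obtain ⟨m, hm, rfl⟩ := d.cover hx1 hx2
    rw [Finset.mem_coe, Finset.mem_image]
    refine ⟨m, ?_, rfl⟩
    rw [List.mem_toFinset, List.mem_filter]
    refine ⟨hm, ?_⟩
    rw [both, vec_eq_one.mp hx3, vec_eq_one.mp hx4]; rfl
  calc (NS (Cd chi) i' j').ncard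
      ≤ (((words chi allT.toList).filter (both i' j')).toFinset.image vec).card := by
        rw [← Set.ncard_coe_finset]
        exact Set.ncard_le_ncard hsub (Finset.finite_toSet _)
    _ ≤ _ := Finset.card_image_le
    _ ≤ _ := List.toFinset_card_le _

theorem LB.spec {chi u : ℕ} {i j : Fin 76} {W : List ℕ} (h : LB chi i j u W)
    (hl : ltL (Hc chi) = true) : u ≤ (NS (Cd chi) i j).ncard := by
  classical
  have hcard : (W.toFinset.image vec).card = u := by
    rw [Finset.card_image_of_injOn, List.toFinset_card_of_nodup (incr_nodup _ h.inc), h.len]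
    intro a ha b hb hab
    rw [Finset.mem_coe, List.mem_toFinset] at ha hb
    exact vec_inj (ltL_spec h.lt a ha) (ltL_spec h.lt b hb) hab
  rw [← hcard, ← Set.ncard_coe_finset]
  apply Set.ncard_le_ncard _ (Set.toFinite _)
  intro x hx
  rw [Finset.mem_coe, Finset.mem_image] at hx
  obtain ⟨m, hm, rfl⟩ := hx
  rw [List.mem_toFinset] at hm
  have hw := List.all_eq_true.mp h.wt m hm
  rw [Bool.and_eq_true, Bool.and_eq_true, bt_eq, bt_eq] at hw
  refine ⟨fun g hg => orthL_spec hl h.orth g hg m hm, ?_, vec_eq_one.mpr hw.2.1, vec_eq_one.mpr hw.2.2⟩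
  rw [wt_vec, ← pcK_eq]
  exact Nat.eq_of_beq_eq_true hw.1

theorem inequiv {C D : Submodule (ZMod 2) (Fin 76 → ZMod 2)} {u v : ℕ}
    (hC : ∃ i j, i ≠ j ∧ u ≤ (NS C i j).ncard) (hD : ∀ i j, i ≠ j → (NS D i j).ncard ≤ v)
    (huv : v < u) : ¬ CodeEquiv C D ∧ ¬ CodeEquiv D C := by
  obtain ⟨i, j, hij, h⟩ := hC
  constructor
  · rintro ⟨σ, hσ⟩
    have h1 := hD (σ.symm i) (σ.symm j) fun h => hij (σ.symm.injective h)
    rw [NS_map hσ, Equiv.apply_symm_apply, Equiv.apply_symm_apply] at h1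
    omega
  · rintro ⟨σ, hσ⟩
    rw [NS_map hσ] at h
    have h1 := hD (σ i) (σ j) fun h => hij (σ.injective h)
    omega

def c1 : ℕ := 274877906943

def c2 : ℕ := 144114913198473215

def c3 : ℕ := 75557719610726248087551

theorem ne31 : ¬ CodeEquiv (Cd c3) (Cd c1) ∧ ¬ CodeEquiv (Cd c1) (Cd c3) :=
  inequiv (u := 184) (v := 183)
    ⟨⟨19, by norm_num⟩, ⟨26, by norm_num⟩, by decide,
      LB.spec (i := ⟨19, by norm_num⟩) (j := ⟨26, by norm_num⟩) lb3 dat3.good.lt⟩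
    (dat1.ub ub_1_0 ub_1_19 ub_1_38 ub_1_57) (by norm_num)

theorem ne32 : ¬ CodeEquiv (Cd c3) (Cd c2) ∧ ¬ CodeEquiv (Cd c2) (Cd c3) :=
  inequiv (u := 184) (v := 179)
    ⟨⟨19, by norm_num⟩, ⟨26, by norm_num⟩, by decide,
      LB.spec (i := ⟨19, by norm_num⟩) (j := ⟨26, by norm_num⟩) lb3 dat3.good.lt⟩
    (dat2.ub ub_2_0 ub_2_19 ub_2_38 ub_2_57) (by norm_num)

theorem ne12 : ¬ CodeEquiv (Cd c1) (Cd c2) ∧ ¬ CodeEquiv (Cd c2) (Cd c1) :=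
  inequiv (u := 180) (v := 179)
    ⟨⟨38, by norm_num⟩, ⟨45, by norm_num⟩, by decide,
      LB.spec (i := ⟨38, by norm_num⟩) (j := ⟨45, by norm_num⟩) lb1 dat1.good.lt⟩
    (dat2.ub ub_2_0 ub_2_19 ub_2_38 ub_2_57) (by norm_num)

/-- There exist at least 3 pairwise inequivalent s-extremal singly even self-dual
`[76, 38, 14]` codes (shadow minimum weight 14), each admitting an automorphism of
order 19, i.e. a coordinate permutation of order 19 mapping the code onto itself. -/
theorem exists_3_sExtremal_76_aut19 :
    ∃ f : Fin 3 → Submodule (ZMod 2) (Fin 76 → ZMod 2),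
      (∀ i, IsSinglyEvenSelfDual (f i) ∧
        Module.finrank (ZMod 2) (f i) = 38 ∧
        minWt (f i) = 14 ∧
        minWtSet (shadow (f i)) = 14 ∧
        ∃ σ : Equiv.Perm (Fin 76), orderOf σ = 19 ∧
          Submodule.map (LinearMap.funLeft (ZMod 2) (ZMod 2) σ) (f i) = f i) ∧
      ∀ i j, i ≠ j → ¬ CodeEquiv (f i) (f j) := by
  refine ⟨![Cd c1, Cd c2, Cd c3], ?_, ?_⟩
  · intro i
    fin_cases i
    · exact dat1.main
    · exact dat2.main
    · exact dat3.main
  · intro i j hij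
    fin_cases i <;> fin_cases j
    · exact absurd rfl hij
    · exact ne12.1
    · exact ne31.2
    · exact ne12.2
    · exact absurd rfl hij
    · exact ne32.2
    · exact ne31.1
    · exact ne32.1
    · exact absurd rfl hij
end

section
/- Let A and B be the 14×14 circulant matrices over 𝔽₂ with first rows (0,0,0,1,0,0,1,1,0,0,0,1,1,1) and (1,0,1,0,1,0,0,1,0,1,0,1,0,1), respectively, and let C₅₆ ⊆ 𝔽₂⁵⁶ be the row space of the 28×56 matrix (I₂₈ | M), where M is the 28×28 block matrix with blocks A, B in the first block row and Bᵀ, Aᵀ in the second block row. Then C₅₆ is a singly even self-dual [56,28,10] code whose shadow has minimum weight 12; in particular, C₅₆ is s-extremal. -/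
open Finset

/-- First row of the circulant matrix `A`. -/
def rowA : Fin 14 → ZMod 2 := ![0, 0, 0, 1, 0, 0, 1, 1, 0, 0, 0, 1, 1, 1]

/-- First row of the circulant matrix `B`. -/
def rowB : Fin 14 → ZMod 2 := ![1, 0, 1, 0, 1, 0, 0, 1, 0, 1, 0, 1, 0, 1]

/-- The 14×14 circulant matrix with first row `rowA`. -/
def matA : Matrix (Fin 14) (Fin 14) (ZMod 2) := fun i j => rowA (j - i)

/-- The 14×14 circulant matrix with first row `rowB`. -/
def matB : Matrix (Fin 14) (Fin 14) (ZMod 2) := fun i j => rowB (j - i)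

/-- The 28×28 block matrix with block rows `(A B)` and `(Bᵀ Aᵀ)`. -/
def M28 : Matrix (Fin 28) (Fin 28) (ZMod 2) := fun i j =>
  if hi : (i : ℕ) < 14 then
    if hj : (j : ℕ) < 14 then matA ⟨i, hi⟩ ⟨j, hj⟩
    else matB ⟨i, hi⟩ ⟨(j : ℕ) - 14, by have := j.isLt; omega⟩
  else
    if hj : (j : ℕ) < 14 then
      matB.transpose ⟨(i : ℕ) - 14, by have := i.isLt; omega⟩ ⟨j, hj⟩
    else
      matA.transpose ⟨(i : ℕ) - 14, by have := i.isLt; omega⟩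
        ⟨(j : ℕ) - 14, by have := j.isLt; omega⟩

/-- The 28×56 generator matrix `( I₂₈ | M28 )`. -/
def G56 : Matrix (Fin 28) (Fin 56) (ZMod 2) := fun i j =>
  if hj : (j : ℕ) < 28 then (if (i : ℕ) = (j : ℕ) then 1 else 0)
  else M28 i ⟨(j : ℕ) - 28, by have := j.isLt; omega⟩

/-- The code `C₅₆`: the row space of `( I₂₈ | M28 )`. -/
def C56 : Submodule (ZMod 2) (Fin 56 → ZMod 2) :=
  Submodule.span (ZMod 2) (Set.range fun i : Fin 28 => G56 i)

/-! ### Kernel computation over bit masks -/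

/-- Popcount table for 7-bit chunks, 4 bits for each entry. -/
def tab7 : ℕ := 6200905725313299744266893093789502126063071545881165772838446113976729779337224604478033454164508541879741555464632174598044869083865094223170395258822928

/-- Popcount of a 7-bit chunk. -/
def pop7 (m : ℕ) : ℕ := (tab7 >>> (4 * m)) % 16

/-- Popcount of a 28-bit mask. -/
def pop28 (m : ℕ) : ℕ :=
  pop7 (m % 128) + pop7 (m / 128 % 128) + pop7 (m / 16384 % 128) + pop7 (m / 2097152 % 128)

/-- The test applied to a combination `a` of `k` rows. -/
def good (k a : ℕ) : Bool :=
  (Nat.beq k 0 || Nat.ble 10 (k + pop28 a)) && Nat.ble (pop28 a) (16 + k)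

/-- Test all the sums of at most `b` rows of the list. -/
def search : List ℕ → ℕ → ℕ → ℕ → Bool
  | [], _, k, a => good k a
  | r :: rs, b, k, a =>
    match b with
    | 0 => good k a
    | b + 1 => search rs b (k + 1) (Nat.xor a r) && search rs (b + 1) k a

/-- Rows of `M28` as bit masks. -/
def rowsM : List ℕ := [178616520, 88797585, 177578787, 86722119, 173444238, 78469404, 156938808, 45442161, 90867939, 181735878, 95052684, 190088985, 111758898, 223517796, 40080555, 80161110, 160305837, 52192602, 104368821, 208737642, 149056212, 29676969, 59353938, 118691493, 237382986, 206330517, 144241962, 20048469]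

/-- Columns of `M28` as bit masks. -/
def colsM : List ℕ := [178604430, 88789788, 177579576, 86723697, 173447394, 78475716, 156935049, 45434643, 90869286, 181738572, 95058072, 190099761, 111764067, 223511751, 238163115, 207907158, 147378861, 26338650, 52660917, 105321834, 210643668, 152851881, 37284690, 74552997, 149105994, 29776533, 59553066, 119089749]

theorem search_rowsM : search rowsM 4 0 0 = true := by decide +kernel

theorem search_colsM : search colsM 4 0 0 = true := by decide +kernel

theorem search_sound (rs : List ℕ) : ∀ (b k a : ℕ), search rs b k a = true →
    ∀ l : List ℕ, l.Sublist rs → l.length ≤ b →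
      good (k + l.length) (l.foldl Nat.xor a) = true := by
  induction rs with
  | nil =>
    intro b k a h l hl _
    obtain rfl := List.sublist_nil.1 hl
    simpa [search] using h
  | cons r rs ih =>
    intro b k a h l hl hb
    cases b with
    | zero =>
      obtain rfl := List.length_eq_zero_iff.1 (Nat.le_zero.1 hb)
      simpa [search] using h
    | succ b =>
      simp only [search, Bool.and_eq_true] at h
      cases hl with
      | cons _ h' => exact ih _ _ _ h.2 l h' hb
      | cons_cons _ h' =>
        have := ih _ _ _ h.1 _ h' (by simpa using hb)
        simpa [Nat.add_assoc, Nat.add_comm 1] using this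

/-! ### Bit masks as vectors -/

/-- The binary vector of a bit mask. -/
def dec (m : ℕ) : Fin 28 → ZMod 2 := fun i => if m.testBit i then 1 else 0

/-- The weight as a sum of natural numbers. -/
def W {n : ℕ} (x : Fin n → ZMod 2) : ℕ := ∑ i, (x i).val

theorem wt_eq_W {n : ℕ} (x : Fin n → ZMod 2) : wt x = W x := by
  have h : ∀ a : ZMod 2, a.val = if a ≠ 0 then 1 else 0 := by decide
  simp only [wt, W, hammingNorm, h, Finset.card_filter]

theorem dec_zero : dec 0 = 0 := by
  funext i; simp [dec]

theorem dec_xor (a b : ℕ) : dec (Nat.xor a b) = dec a + dec b := by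
  funext i
  have : (Nat.xor a b).testBit i = (a.testBit i ^^ b.testBit i) := Nat.testBit_xor a b i
  simp only [dec, this, Pi.add_apply]
  cases a.testBit i <;> cases b.testBit i <;> decide

theorem pop7_eq : ∀ c < 128, pop7 c = ∑ i : Fin 7, (c.testBit i).toNat := by decide +kernel

theorem pop7_chunk (m k : ℕ) :
    pop7 (m / 2 ^ k % 128) = ∑ i : Fin 7, (m.testBit (k + i)).toNat := by
  rw [pop7_eq _ (Nat.mod_lt _ (by norm_num))]
  refine Finset.sum_congr rfl fun i _ => ?_
  have : (128 : ℕ) = 2 ^ 7 := by norm_num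
  rw [this, Nat.testBit_mod_two_pow, Nat.testBit_div_two_pow]
  simp [Nat.add_comm]

theorem W_dec (m : ℕ) : W (dec m) = pop28 m := by
  have h0 := pop7_chunk m 0
  have h1 := pop7_chunk m 7
  have h2 := pop7_chunk m 14
  have h3 := pop7_chunk m 21
  norm_num at h0 h1 h2 h3
  have hv : ∀ b : Bool, (if b = true then (1 : ZMod 2) else 0).val = b.toNat := by decide
  simp only [pop28, h0, h1, h2, h3, W, dec, hv]
  simp only [Fin.sum_univ_succ, Fin.sum_univ_zero, Fin.val_succ, Fin.val_zero]
  norm_num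
  ring

theorem dec_foldl (l : List ℕ) : ∀ a, dec (l.foldl Nat.xor a) = dec a + (l.map dec).sum := by
  induction l with
  | nil => intro a; simp
  | cons r l ih => intro a; rw [List.foldl_cons, ih, dec_xor, List.map_cons, List.sum_cons, add_assoc]

/-- What the search proves for a matrix whose rows are listed as bit masks. -/
theorem good_of_search (N : Matrix (Fin 28) (Fin 28) (ZMod 2)) (rows : Fin 28 → ℕ)
    (hN : ∀ i j, dec (rows i) j = N i j)
    (hs : search ((List.finRange 28).map rows) 4 0 0 = true)
    (x : Fin 28 → ZMod 2) (hx : W x ≤ 4) :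
    (x ≠ 0 → 10 ≤ W x + W (Matrix.vecMul x N)) ∧ W (Matrix.vecMul x N) ≤ 16 + W x := by
  set l := (List.finRange 28).filter (fun i => x i ≠ 0) with hl
  have hlen : l.length = W x := by
    have h : ∀ a : ZMod 2, a.val = if a ≠ 0 then 1 else 0 := by decide
    simp only [W, h, ← Finset.card_filter]
    rw [← List.toFinset_card_of_nodup ((List.nodup_finRange 28).filter _)]
    congr 1
    ext i; simp
  have hsum : dec ((l.map rows).foldl Nat.xor 0) = Matrix.vecMul x N := by
    rw [dec_foldl, dec_zero, zero_add, List.map_map]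
    have : (l.map (dec ∘ rows)).sum = ∑ i ∈ univ.filter (fun i => x i ≠ 0), (fun j => N i j) := by
      rw [show (dec ∘ rows) = fun i j => N i j from funext fun i => funext (hN i),
        ← List.sum_toFinset _ ((List.nodup_finRange 28).filter _)]
      congr 1
      ext i; simp
    rw [this]
    funext j
    simp only [Finset.sum_apply, Matrix.vecMul, dotProduct, Finset.sum_filter]
    refine Finset.sum_congr rfl fun i _ => ?_
    have h : ∀ a b : ZMod 2, (if a ≠ 0 then b else 0) = a * b := by decide
    exact h _ _
  have key := search_sound _ _ _ _ hs (l.map rows)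
    ((List.filter_sublist (l := List.finRange 28)).map rows) (by simpa [hlen] using hx)
  rw [List.length_map, hlen, zero_add] at key
  simp only [good, ← W_dec, hsum, Bool.and_eq_true, Bool.or_eq_true,
    Nat.ble_eq] at key
  refine ⟨fun h0 => ?_, key.2⟩
  rcases key.1 with h | h
  · exfalso
    apply h0
    funext i
    have h' : (x i).val = 0 := (Finset.sum_eq_zero_iff.1 (Nat.eq_of_beq_eq_true h)) i (mem_univ i)
    exact (ZMod.val_eq_zero _).1 h'
  · exact h

theorem rowsM_spec : ∀ j i : Fin 28, dec (rowsM.getD (i : ℕ) 0) j = M28 i j := by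
  decide +kernel

theorem colsM_spec : ∀ i j : Fin 28, dec (colsM.getD (i : ℕ) 0) j = M28 j i := by
  decide +kernel

theorem rowsM_list : (List.finRange 28).map (fun i : Fin 28 => rowsM.getD (i : ℕ) 0) = rowsM := by
  decide +kernel

theorem colsM_list : (List.finRange 28).map (fun i : Fin 28 => colsM.getD (i : ℕ) 0) = colsM := by
  decide +kernel

theorem good_rows (x : Fin 28 → ZMod 2) (hx : W x ≤ 4) :
    (x ≠ 0 → 10 ≤ W x + W (Matrix.vecMul x M28)) ∧ W (Matrix.vecMul x M28) ≤ 16 + W x :=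
  good_of_search M28 (fun i => rowsM.getD (i : ℕ) 0) (fun i j => rowsM_spec j i)
    (by rw [rowsM_list]; exact search_rowsM) x hx

theorem good_cols (x : Fin 28 → ZMod 2) (hx : W x ≤ 4) :
    (x ≠ 0 → 10 ≤ W x + W (Matrix.mulVec M28 x)) ∧ W (Matrix.mulVec M28 x) ≤ 16 + W x := by
  rw [← Matrix.vecMul_transpose]
  exact good_of_search M28.transpose (fun i => colsM.getD (i : ℕ) 0)
    (fun i j => by rw [Matrix.transpose_apply]; exact colsM_spec i j)
    (by rw [colsM_list]; exact search_colsM) x hx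

theorem M_orth : ∀ i j : Fin 28, ∑ k, M28 i k * M28 j k = if i = j then 1 else 0 := by
  decide +kernel

theorem M_mul_T : M28 * M28.transpose = 1 := by
  ext i j
  simp only [Matrix.mul_apply, Matrix.one_apply, Matrix.transpose_apply]
  exact M_orth i j

theorem M_orth' : ∀ i j : Fin 28, ∑ k, M28 k i * M28 k j = if i = j then 1 else 0 := by
  decide +kernel

theorem T_mul_M : M28.transpose * M28 = 1 := by
  ext i j
  simp only [Matrix.mul_apply, Matrix.one_apply, Matrix.transpose_apply]
  exact M_orth' i j

theorem M_row_sum : ∀ i : Fin 28, ∑ k, M28 i k = 1 := by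
  decide +kernel

theorem M_ones : Matrix.mulVec M28 (1 : Fin 28 → ZMod 2) = 1 := by
  funext i
  simp only [Matrix.mulVec, dotProduct, Pi.one_apply, mul_one]
  exact M_row_sum i

/-! ### The two halves of a vector of length 56 -/

/-- The `i`-th coordinate of the left half. -/
def lo (i : Fin 28) : Fin 56 := ⟨i, by have := i.isLt; omega⟩

/-- The `i`-th coordinate of the right half. -/
def hi (i : Fin 28) : Fin 56 := ⟨28 + i, by have := i.isLt; omega⟩

/-- Left half. -/
def left (c : Fin 56 → ZMod 2) : Fin 28 → ZMod 2 := fun i => c (lo i)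

/-- Right half. -/
def right (c : Fin 56 → ZMod 2) : Fin 28 → ZMod 2 := fun i => c (hi i)

/-- The vector with given halves. -/
def join (x y : Fin 28 → ZMod 2) : Fin 56 → ZMod 2 := fun j =>
  if hj : (j : ℕ) < 28 then x ⟨j, hj⟩ else y ⟨(j : ℕ) - 28, by have := j.isLt; omega⟩

theorem left_join (x y : Fin 28 → ZMod 2) : left (join x y) = x := by
  funext i; simp [left, join, lo]

theorem right_join (x y : Fin 28 → ZMod 2) : right (join x y) = y := by
  funext i; simp [right, join, hi]

theorem sum_split {R : Type*} [AddCommMonoid R] (f : Fin 56 → R) :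
    ∑ i, f i = ∑ i, f (lo i) + ∑ i, f (hi i) :=
  Fin.sum_univ_add (a := 28) (b := 28) f

theorem W_split (c : Fin 56 → ZMod 2) : W c = W (left c) + W (right c) :=
  sum_split _

theorem ext_halves {c d : Fin 56 → ZMod 2} (h1 : left c = left d) (h2 : right c = right d) :
    c = d := by
  funext j
  by_cases hj : (j : ℕ) < 28
  · exact congrFun h1 ⟨j, hj⟩
  · have := congrFun h2 ⟨(j : ℕ) - 28, by have := j.isLt; omega⟩
    have e : hi ⟨(j : ℕ) - 28, by have := j.isLt; omega⟩ = j := by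
      apply Fin.ext; simp only [hi]; omega
    simpa only [right, e] using this

theorem G_lo (i j : Fin 28) : G56 i (lo j) = if i = j then 1 else 0 := by
  have : (lo j : ℕ) = j := rfl
  simp only [G56, this, j.isLt, dif_pos, Fin.ext_iff]

theorem G_hi_aux : ∀ j i : Fin 28, G56 i (hi j) = M28 i j := by
  decide +kernel

theorem G_hi (i j : Fin 28) : G56 i (hi j) = M28 i j := G_hi_aux j i

theorem dot_G (s : Fin 56 → ZMod 2) (i : Fin 28) :
    ∑ j, s j * G56 i j = left s i + Matrix.mulVec M28 (right s) i := by
  rw [sum_split]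
  simp only [G_lo, G_hi, Matrix.mulVec, dotProduct, left, right]
  refine congrArg₂ (· + ·) ?_ ?_
  · simp
  · exact Finset.sum_congr rfl fun j _ => mul_comm _ _

theorem left_comb (a : Fin 28 → ZMod 2) : left (∑ i, a i • G56 i) = a := by
  funext j
  simp [left, Finset.sum_apply, G_lo]

theorem right_comb (a : Fin 28 → ZMod 2) :
    right (∑ i, a i • G56 i) = Matrix.vecMul a M28 := by
  funext j
  simp only [right, Finset.sum_apply, Pi.smul_apply, G_hi, Matrix.vecMul, dotProduct, smul_eq_mul]

theorem mem_C56 (c : Fin 56 → ZMod 2) :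
    c ∈ C56 ↔ right c = Matrix.vecMul (left c) M28 := by
  rw [C56, Submodule.mem_span_range_iff_exists_fun]
  constructor
  · rintro ⟨a, rfl⟩
    rw [left_comb, right_comb]
  · intro h
    refine ⟨left c, ext_halves (left_comb _) ?_⟩
    rw [right_comb, h]

theorem G_mem (i : Fin 28) : G56 i ∈ C56 :=
  Submodule.subset_span ⟨i, rfl⟩

theorem vecMul_of_mulVec {x y : Fin 28 → ZMod 2} (h : x = Matrix.mulVec M28 y) :
    y = Matrix.vecMul x M28 := by
  rw [h, ← Matrix.mulVec_transpose, Matrix.mulVec_mulVec, T_mul_M, Matrix.one_mulVec]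

theorem mulVec_of_vecMul {x y : Fin 28 → ZMod 2} (h : y = Matrix.vecMul x M28) :
    x = Matrix.mulVec M28 y := by
  rw [h, ← Matrix.mulVec_transpose, Matrix.mulVec_mulVec, M_mul_T, Matrix.one_mulVec]

theorem mem_C56' (c : Fin 56 → ZMod 2) :
    c ∈ C56 ↔ left c = Matrix.mulVec M28 (right c) := by
  rw [mem_C56]
  exact ⟨mulVec_of_vecMul, vecMul_of_mulVec⟩

theorem mem_C56_iff_dot (c : Fin 56 → ZMod 2) :
    c ∈ C56 ↔ ∀ i, ∑ j, c j * G56 i j = 0 := by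
  have h2 : ∀ a b : ZMod 2, a = b ↔ a + b = 0 := by decide
  rw [mem_C56']
  constructor
  · intro h i
    rw [dot_G]
    exact (h2 _ _).1 (congrFun h i)
  · intro h
    funext i
    have := h i
    rw [dot_G] at this
    exact (h2 _ _).2 this

theorem dot_mem {c d : Fin 56 → ZMod 2} (hc : c ∈ C56) (hd : d ∈ C56) :
    ∑ j, c j * d j = 0 := by
  replace hc := (mem_C56_iff_dot c).1 hc
  refine Submodule.span_induction (p := fun (d : Fin 56 → ZMod 2) _ => ∑ j : Fin 56, c j * d j = 0) ?_ ?_ ?_ ?_ hd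
  · rintro _ ⟨i, rfl⟩
    exact hc i
  · simp
  · intro x y _ _ hx hy
    simp [mul_add, Finset.sum_add_distrib, hx, hy]
  · intro a x _ hx
    simp only [Pi.smul_apply, smul_eq_mul, mul_left_comm _ a, ← Finset.mul_sum, hx, mul_zero]

theorem selfDual_C56 : IsSelfDual C56 := by
  ext c
  constructor
  · intro hc d hd
    exact dot_mem hc hd
  · intro h
    exact (mem_C56_iff_dot c).2 fun i => h _ (G_mem i)

theorem finrank_C56 : Module.finrank (ZMod 2) C56 = 28 := by
  have : LinearIndependent (ZMod 2) (fun i : Fin 28 => (G56 i : Fin 56 → ZMod 2)) := by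
    rw [Fintype.linearIndependent_iff]
    intro a ha i
    have := left_comb a
    rw [ha] at this
    exact (congrFun this i).symm
  rw [C56, finrank_span_eq_card this, Fintype.card_fin]

/-! ### Weights modulo 4 -/

/-- Size of the intersection of the supports. -/
def I {n : ℕ} (x y : Fin n → ZMod 2) : ℕ := ∑ i, (x i * y i).val

theorem W_add {n : ℕ} (x y : Fin n → ZMod 2) : W (x + y) + 2 * I x y = W x + W y := by
  have h : ∀ a b : ZMod 2, (a + b).val + 2 * (a * b).val = a.val + b.val := by decide
  simp only [W, I, Finset.mul_sum, ← Finset.sum_add_distrib, Pi.add_apply, h]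

theorem W_zero {n : ℕ} : W (0 : Fin n → ZMod 2) = 0 := by simp [W]

theorem W_one_add (x : Fin 28 → ZMod 2) : W (1 + x) + W x = 28 := by
  have h : ∀ a : ZMod 2, (1 + a).val + a.val = 1 := by decide
  simp only [W, ← Finset.sum_add_distrib, Pi.add_apply, Pi.one_apply, h]
  simp

theorem I_cast {n : ℕ} (x y : Fin n → ZMod 2) : (I x y : ZMod 2) = ∑ i, x i * y i := by
  simp [I]

theorem W_cast {n : ℕ} (x : Fin n → ZMod 2) : (W x : ZMod 2) = ∑ i, x i := by
  simp [W]

theorem W_G : ∀ i : Fin 28, W (M28 i) = 13 := by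
  have : ∀ i : Fin 28, ∑ j, (M28 i j).val = 13 := by decide +kernel
  exact this

theorem left_G (i : Fin 28) : left (G56 i) = Pi.single i 1 := by
  funext j
  simp only [left, G_lo, Pi.single_apply, eq_comm]

theorem right_G (i : Fin 28) : right (G56 i) = M28 i := by
  funext j
  exact G_hi i j

theorem W_single (i : Fin 28) : W (Pi.single i (1 : ZMod 2)) = 1 := by
  have h : ∀ j : Fin 28, ((Pi.single i (1 : ZMod 2) : Fin 28 → ZMod 2) j).val
      = if j = i then 1 else 0 := by
    intro j
    rw [Pi.single_apply]
    split_ifs <;> rfl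
  simp only [W, h]
  simp

/-- For a codeword, the weights of the halves agree modulo 4. -/
theorem halves_mod4 {c : Fin 56 → ZMod 2} (hc : c ∈ C56) :
    W (left c) % 4 = W (right c) % 4 := by
  refine Submodule.span_induction
    (p := fun d _ => W (left d) % 4 = W (right d) % 4) ?_ ?_ ?_ ?_ hc
  · rintro _ ⟨i, rfl⟩
    simp only [left_G, right_G, W_single, W_G]
  · have h1 : left 0 = 0 := rfl
    have h2 : right 0 = 0 := rfl
    rw [h1, h2]
  · intro x y hx hy h1 h2
    have e1 := W_add (left x) (left y)
    have e2 := W_add (right x) (right y)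
    have h3 : left (x + y) = left x + left y := rfl
    have h4 : right (x + y) = right x + right y := rfl
    have h5 : ((I (left x) (left y) + I (right x) (right y) : ℕ) : ZMod 2) = 0 := by
      rw [Nat.cast_add, I_cast, I_cast, ← dot_mem hx hy, sum_split]
      rfl
    have h6 : 2 ∣ I (left x) (left y) + I (right x) (right y) :=
      (ZMod.natCast_eq_zero_iff _ 2).1 h5
    rw [h3, h4]
    omega
  · intro a x _ h
    have ha : ∀ a : ZMod 2, a = 0 ∨ a = 1 := by decide
    rcases ha a with rfl | rfl
    · rw [zero_smul]; rfl
    · rwa [one_smul]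

/-! ### Minimum weights -/

theorem W_eq_zero {n : ℕ} {x : Fin n → ZMod 2} (h : W x = 0) : x = 0 := by
  funext i
  have h' : (x i).val = 0 := (Finset.sum_eq_zero_iff.1 h) i (mem_univ i)
  exact (ZMod.val_eq_zero _).1 h'

theorem code_lower {c : Fin 56 → ZMod 2} (hc : c ∈ C56) (h0 : c ≠ 0) : 10 ≤ W c := by
  have h1 := (mem_C56 c).1 hc
  have h2 := (mem_C56' c).1 hc
  rw [W_split]
  by_contra hlt
  have hcase : W (left c) ≤ 4 ∨ W (right c) ≤ 4 := by omega
  rcases hcase with h | h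
  · have := (good_rows _ h).1 (fun e => h0 (ext_halves e (by rw [h1, e, Matrix.zero_vecMul]; rfl)))
    rw [← h1] at this
    omega
  · have := (good_cols _ h).1 (fun e => h0 (ext_halves (by rw [h2, e, Matrix.mulVec_zero]; rfl) e))
    rw [← h2] at this
    omega

/-- A codeword of weight 10. -/
def c10 : Fin 56 → ZMod 2 := ∑ i ∈ {0, 3, 16}, G56 i

theorem c10_mem : c10 ∈ C56 := Submodule.sum_mem _ fun i _ => G_mem i

theorem c10_wt : W c10 = 10 := by
  have : ∑ j, (∑ i ∈ ({0, 3, 16} : Finset (Fin 28)), G56 i j).val = 10 := by decide +kernel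
  rw [← this]
  refine Finset.sum_congr rfl fun j _ => congrArg ZMod.val ?_
  exact Finset.sum_apply j _ _

theorem minWt_C56 : minWt C56 = 10 := by
  refine IsLeast.csInf_eq ⟨⟨c10, c10_mem, ?_, ?_⟩, ?_⟩
  · intro h
    have := c10_wt
    rw [h, W_zero] at this
    omega
  · rw [wt_eq_W, c10_wt]
  · rintro w ⟨x, hx, h0, rfl⟩
    rw [wt_eq_W]
    exact code_lower hx h0

theorem one_add_cancel (x : Fin 28 → ZMod 2) : 1 + (1 + x) = x := by
  have h : ∀ a : ZMod 2, 1 + (1 + a) = a := by decide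
  funext i
  exact h (x i)

theorem shadow_dot {s : Fin 56 → ZMod 2} (hs : s ∈ shadow C56) :
    left s = 1 + Matrix.mulVec M28 (right s) := by
  have hz : ∀ a : ZMod 2, a = 0 ∨ a = 1 := by decide
  have hsame : ∀ i, ∑ j, s j * G56 i j = ∑ j, s j * G56 0 j := by
    intro i
    have hm : G56 0 + G56 i ∈ evenSub C56 := by
      refine ⟨Submodule.add_mem _ (G_mem 0) (G_mem i), ?_⟩
      have e := W_add (G56 0) (G56 i)
      have h2 : 2 ∣ I (G56 0) (G56 i) := by
        rw [← ZMod.natCast_eq_zero_iff, I_cast]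
        exact dot_mem (G_mem 0) (G_mem i)
      have hw : ∀ i, W (G56 i) = 14 := fun i => by
        rw [W_split, left_G, right_G, W_single, W_G]
      rw [hw, hw] at e
      rw [wt_eq_W]
      omega
    have := hs.1 _ hm
    simp only [Pi.add_apply, mul_add, Finset.sum_add_distrib] at this
    have h2 : ∀ a b : ZMod 2, a + b = 0 → b = a := by decide
    exact h2 _ _ this
  rcases hz (∑ j, s j * G56 0 j) with h | h
  · exact absurd ((mem_C56_iff_dot s).2 fun i => by rw [hsame, h]) hs.2
  · funext i
    have := hsame i
    rw [h, dot_G] at this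
    have h3 : ∀ a b : ZMod 2, a + b = 1 → a = 1 + b := by decide
    exact h3 _ _ this

theorem shadow_right {s : Fin 56 → ZMod 2} (h : left s = 1 + Matrix.mulVec M28 (right s)) :
    right s = 1 + Matrix.vecMul (left s) M28 := by
  have h1 : left s = Matrix.mulVec M28 (1 + right s) := by
    rw [Matrix.mulVec_add, M_ones, h]
  rw [← vecMul_of_mulVec h1, one_add_cancel]

theorem shadow_lower {s : Fin 56 → ZMod 2} (hs : s ∈ shadow C56) : 12 ≤ W s := by
  have h1 := shadow_dot hs
  have h2 := shadow_right h1
  have hc : join (left s) (Matrix.vecMul (left s) M28) ∈ C56 := by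
    rw [mem_C56, left_join, right_join]
  have h4 := halves_mod4 hc
  rw [left_join, right_join] at h4
  have e2 := W_one_add (Matrix.vecMul (left s) M28)
  rw [← h2] at e2
  have e1 := W_one_add (Matrix.mulVec M28 (right s))
  rw [← h1] at e1
  rw [W_split]
  by_contra hlt
  have hcase : W (left s) ≤ 4 ∨ W (right s) ≤ 4 := by omega
  rcases hcase with h | h
  · have := (good_rows _ h).2
    omega
  · have := (good_cols _ h).2
    omega

/-- The left half of a shadow vector of weight 12. -/
def x12 : Fin 28 → ZMod 2 := dec 3

/-- A shadow vector of weight 12. -/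
def s12 : Fin 56 → ZMod 2 := join x12 (1 + Matrix.vecMul x12 M28)

theorem s12_mem : s12 ∈ shadow C56 := by
  have hdot : ∀ y ∈ C56, ∑ i, s12 i * y i = ∑ i, right y i := by
    intro y hy
    have hc : join x12 (Matrix.vecMul x12 M28) ∈ C56 := by
      rw [mem_C56, left_join, right_join]
    have hd := dot_mem hc hy
    rw [sum_split] at hd ⊢
    have a1 : ∀ i, s12 (lo i) = x12 i := fun i => congrFun (left_join _ _) i
    have a2 : ∀ i, s12 (hi i) = 1 + Matrix.vecMul x12 M28 i :=
      fun i => congrFun (right_join _ _) i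
    have b1 : ∀ i, join x12 (Matrix.vecMul x12 M28) (lo i) = x12 i :=
      fun i => congrFun (left_join _ _) i
    have b2 : ∀ i, join x12 (Matrix.vecMul x12 M28) (hi i) = Matrix.vecMul x12 M28 i :=
      fun i => congrFun (right_join _ _) i
    simp only [b1, b2] at hd
    simp only [a1, a2, add_mul, one_mul, Finset.sum_add_distrib]
    rw [add_left_comm, hd, add_zero]
    rfl
  constructor
  · rintro y ⟨hy, h4⟩
    rw [hdot y hy, ← W_cast, ZMod.natCast_eq_zero_iff]
    have := halves_mod4 hy
    rw [wt_eq_W, W_split] at h4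
    omega
  · intro h
    have h1 := hdot _ (G_mem 0)
    rw [dot_mem h (G_mem 0), right_G, M_row_sum] at h1
    exact zero_ne_one h1

theorem s12_wt : W s12 = 12 := by
  rw [W_split, s12, left_join, right_join]
  have h1 : W x12 = 2 := by rw [x12, W_dec]; decide +kernel
  have h2 : Matrix.vecMul x12 M28 = dec 267356505 := by
    have : ∀ j : Fin 28, ∑ i, dec 3 i * M28 i j = dec 267356505 j := by decide +kernel
    funext j
    simp only [Matrix.vecMul, dotProduct, x12]
    exact this j
  have h3 : W (dec 267356505) = 18 := by rw [W_dec]; decide +kernel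
  have := W_one_add (dec 267356505)
  rw [h2, h1]
  omega

theorem minWt_shadow : minWtSet (shadow C56) = 12 := by
  refine IsLeast.csInf_eq ⟨⟨s12, s12_mem, ?_, ?_⟩, ?_⟩
  · intro h
    have := s12_wt
    rw [h, W_zero] at this
    omega
  · rw [wt_eq_W, s12_wt]
  · rintro w ⟨x, hx, h0, rfl⟩
    rw [wt_eq_W]
    exact shadow_lower hx

theorem singlyEven_C56 : IsSinglyEvenSelfDual C56 := by
  refine ⟨selfDual_C56, c10, c10_mem, ?_⟩
  rw [wt_eq_W, c10_wt]
  decide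

/-- `C₅₆` is a singly even self-dual `[56, 28, 10]` code whose shadow has minimum
weight 12; in particular, `C₅₆` is s-extremal. -/
theorem C56_sExtremal :
    IsSinglyEvenSelfDual C56 ∧
    Module.finrank (ZMod 2) C56 = 28 ∧
    minWt C56 = 10 ∧
    minWtSet (shadow C56) = 12 ∧
    IsSExtremal C56 := by
  refine ⟨singlyEven_C56, finrank_C56, minWt_C56, minWt_shadow, singlyEven_C56, ?_⟩
  rw [minWt_C56, minWt_shadow]
  norm_num
end
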